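/- arXiv:2208.00582 — 3 statements merged into one kernel-verified Lean document; each statement's English description precedes it below -/
import Mathlib

section
/- Let W be a double-well potential, n ≥ 1, and let (ε_i) be a sequence of positive reals with ε_i → 0. For each i let u_i be a double-well phase transition with parameter ε_i on the flat torus T^{1+n}. Let 0 ≤ θ_1 < θ_2 < ⋯ < θ_m < 2π (m ≥ 1) and set Σ := ⋃_{k=1}^m ({θ_k} + 2πℤ) × ℝ^n ⊆ ℝ^{1+n}. Assume each nodal set Z_i := { x ∈ ℝ^{1+n} : u_i(x) = 0 } is nonempty and the Hausdorff distance between Z_i and Σ tends to 0 as i → ∞. Then the consecutive gaps between the angles are all equal: setting θ_{m+1} := θ_1 + 2π, one has θ_{k+1} − θ_k = 2π/m for every k ∈ {1, …, m}; equivalently, Σ is invariant under the rotation of the first factor by 2π/m radians. -/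
open Real Filter Set

/-- `W` is a double-well potential. -/
structure IsDoubleWell (W : ℝ → ℝ) : Prop where
  smooth : ContDiff ℝ (⊤ : ℕ∞) W
  nonneg : ∀ x, 0 ≤ W x
  eq_zero_iff : ∀ x, W x = 0 ↔ x = 1 ∨ x = -1
  even : ∀ x, W (-x) = W x
  deriv2_pos_one : 0 < iteratedDeriv 2 W 1
  deriv2_pos_neg_one : 0 < iteratedDeriv 2 W (-1)
  mono : StrictMonoOn (fun x => deriv W x / x) (Set.Ioo (0 : ℝ) 1)
  anti : StrictAntiOn (fun x => deriv W x / x) (Set.Ioo (-1 : ℝ) 0)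

/-- Second derivative of `u` at `x` in the `j`-th coordinate direction. -/
noncomputable def secondDirDeriv {d : ℕ} (u : EuclideanSpace ℝ (Fin d) → ℝ)
    (x : EuclideanSpace ℝ (Fin d)) (j : Fin d) : ℝ :=
  iteratedDeriv 2 (fun t : ℝ => u (x + t • EuclideanSpace.single j 1)) 0

/-- Euclidean Laplacian `Δu = Σ_j ∂²u/∂x_j²`. -/
noncomputable def lap {d : ℕ} (u : EuclideanSpace ℝ (Fin d) → ℝ)
    (x : EuclideanSpace ℝ (Fin d)) : ℝ :=
  ∑ j : Fin d, secondDirDeriv u x j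

/-- Double-well phase transition with parameter `ε` on the flat torus
`(ℝ/2πℤ) × (ℝ/ℤ)ⁿ`, viewed as a periodic function on `ℝ^{1+n}`
(first coordinate is the circle direction). -/
structure IsPhaseTransitionTorus {n : ℕ} (W : ℝ → ℝ) (ε : ℝ)
    (u : EuclideanSpace ℝ (Fin (n + 1)) → ℝ) : Prop where
  smooth : ContDiff ℝ (⊤ : ℕ∞) u
  mem_Icc : ∀ x, u x ∈ Set.Icc (-1 : ℝ) 1
  periodic_first : ∀ x, u (x + (2 * π) • EuclideanSpace.single 0 1) = u x
  periodic_rest : ∀ j : Fin (n + 1), j ≠ 0 →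
    ∀ x, u (x + EuclideanSpace.single j 1) = u x
  pde : ∀ x, ε ^ 2 * lap u x = deriv W (u x)

/-! Fix consecutive hyperplanes `{x | x 0 = r}` of `Σ` at `r = a₀ < a < b < c` and suppose
`b - a < c - b`. For small `ε` the transition `u` has a sign on each of the three slabs between
them, and two of the signs agree. Say both are negative, and let `U r` be the supremum of `u` over
`{x | x 0 = r}`; it is a viscosity subsolution of `ε² U'' = W'(U)`. The Dirichlet profile `q_ℓ`, the
positive solution on `[0, ℓ]` vanishing at the endpoints, has an end slope that increases strictly
with `ℓ`. Hence the barrier gluing a bump `t q_ℓ₁` to a dip `-t' q_ℓ₂`, where `ℓ₁ < ℓ₂` and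
`t' < 1 < t`, can be chosen steeper on the dip. Its kink is then concave, and as `W'(x) / x` is
strictly increasing on `(0, 1)`, `U` cannot touch it from below anywhere. Sliding the barrier, with
its bump over the gap between the two slabs and its dip over the wider slab to the right, shows that
`u < 0` near the right end of that gap, contradicting the convergence of the nodal sets. So no gap
is shorter than the next one: the gaps are antitone, and being periodic they are constant. -/

open Metric Function
open scoped Topology NNReal
open EuclideanSpace (single)

/-! ### Touching and periodicity -/

section FirstTouch

variable {X Y : Type*} [TopologicalSpace X] [TopologicalSpace Y]

theorem exists_first_touch_of_continuous [PreconnectedSpace X] [CompactSpace Y] {D : X × Y → ℝ}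
    (hD : Continuous D) {a b : X} (ha : ∀ y, 0 < D (a, y)) (hb : ∃ y, D (b, y) ≤ 0) :
    ∃ x, (∀ y, 0 ≤ D (x, y)) ∧ ∃ y, D (x, y) = 0 := by
  have hnonneg : IsClosed {x | ∀ y, 0 ≤ D (x, y)} := by
    simp only [ofPred_forall]
    exact isClosed_iInter fun y => isClosed_le continuous_const (by fun_prop)
  have hnonpos : IsClosed {x | ∃ y, D (x, y) ≤ 0} := by
    have := isClosedMap_fst_of_compactSpace _ (isClosed_le hD (continuous_const (y := 0)))
    convert this using 1
    ext x
    simp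
  have hcover : (univ : Set X) ⊆ {x | ∀ y, 0 ≤ D (x, y)} ∪ {x | ∃ y, D (x, y) ≤ 0} := by
    intro x _
    by_cases h : ∃ y, D (x, y) ≤ 0
    · exact Or.inr h
    · push Not at h
      exact Or.inl fun y => (h y).le
  obtain ⟨x, -, hx, y, hy⟩ := isPreconnected_closed_iff.1 isPreconnected_univ _ _ hnonneg hnonpos
    hcover ⟨a, mem_univ a, fun y => (ha y).le⟩ ⟨b, mem_univ b, hb⟩
  exact ⟨x, hx, y, hy.antisymm (hx y)⟩

theorem exists_first_touch {S : Set X} {K : Set Y} {D : X × Y → ℝ} (hS : IsPreconnected S)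
    (hK : IsCompact K) (hD : ContinuousOn D (S ×ˢ K)) {a b : X} (haS : a ∈ S) (hbS : b ∈ S)
    (ha : ∀ y ∈ K, 0 < D (a, y)) (hb : ∃ y ∈ K, D (b, y) ≤ 0) :
    ∃ x ∈ S, (∀ y ∈ K, 0 ≤ D (x, y)) ∧ ∃ y ∈ K, D (x, y) = 0 := by
  have := isPreconnected_iff_preconnectedSpace.1 hS
  have := isCompact_iff_compactSpace.1 hK
  obtain ⟨y, hyK, hy⟩ := hb
  obtain ⟨x, hx, z, hz⟩ := exists_first_touch_of_continuous (X := S) (Y := K)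
    (D := fun p => D (p.1, p.2)) (hD.comp_continuous (by fun_prop) fun p => ⟨p.1.2, p.2.2⟩)
    (a := ⟨a, haS⟩) (b := ⟨b, hbS⟩) (fun y => ha y y.2) ⟨⟨y, hyK⟩, hy⟩
  exact ⟨x, x.2, fun y hy => hx ⟨y, hy⟩, z, z.2, hz⟩

end FirstTouch

section Calculus

variable {f f' : ℝ → ℝ} {a d : ℝ}

theorem nonpos_of_isLocalMax_of_hasDerivAt (hf : ∀ᶠ t in 𝓝 a, HasDerivAt f (f' t) t)
    (hf' : HasDerivAt f' d a) (hmax : IsLocalMax f a) : d ≤ 0 := by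
  by_contra! hd
  have hderiv : deriv f =ᶠ[𝓝 a] f' := hf.mono fun t ht => ht.deriv
  have hmin : IsLocalMin f a := isLocalMin_of_deriv_deriv_pos
    (by rwa [hderiv.deriv_eq, hf'.deriv]) hmax.deriv_eq_zero hf.self_of_nhds.continuousAt
  have hconst : f =ᶠ[𝓝 a] fun _ => f a := hmax.and hmin |>.mono fun t ht => ht.1.antisymm ht.2
  have hzero : f' =ᶠ[𝓝 a] fun _ => 0 := hderiv.symm.trans (by simpa using hconst.deriv)
  exact hd.ne' (hf'.unique ((hasDerivAt_const a 0).congr_of_eventuallyEq hzero))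

theorem eventually_nhdsGT_lt_of_hasDerivWithinAt (hf : HasDerivWithinAt f d (Ioi a) a)
    (hd : 0 < d) : ∀ᶠ t in 𝓝[>] a, f a < f t := by
  have hslope := ((hasDerivWithinAt_iff_tendsto_slope' (by simp)).1 hf).eventually_const_lt hd
  filter_upwards [hslope, self_mem_nhdsWithin] with t ht hat
  rw [slope_def_field] at ht
  exact sub_pos.1 ((div_pos_iff_of_pos_right (sub_pos.2 hat)).1 ht)

theorem eventually_nhdsLT_lt_of_hasDerivWithinAt (hf : HasDerivWithinAt f d (Iio a) a)
    (hd : 0 < d) : ∀ᶠ t in 𝓝[<] a, f t < f a := by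
  have hslope := ((hasDerivWithinAt_iff_tendsto_slope' (by simp)).1 hf).eventually_const_lt hd
  filter_upwards [hslope, self_mem_nhdsWithin] with t ht hat
  rw [slope_comm, slope_def_field] at ht
  exact sub_pos.1 ((div_pos_iff_of_pos_right (sub_pos.2 hat)).1 ht)

end Calculus

theorem eq_of_antitone_of_periodic {α : Type*} [PartialOrder α] {g : ℤ → α} {m : ℤ}
    (hm : 0 < m) (hanti : Antitone g) (hper : Function.Periodic g m) (i j : ℤ) : g i = g j := by
  have key : ∀ i j, g i ≤ g j := fun i j => by
    have hle : max 0 (j - i) ≤ max 0 (j - i) * m := le_mul_of_one_le_right (le_max_left _ _) hm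
    rw [← hper.int_mul (max 0 (j - i)) i, Int.cast_id]
    exact hanti (by linarith [le_max_right 0 (j - i)])
  exact (key i j).antisymm (key j i)

/-! ### Double-well potentials -/

namespace IsDoubleWell

variable {W : ℝ → ℝ} (hW : IsDoubleWell W)
include hW

theorem hasDerivAt (x : ℝ) : HasDerivAt W (deriv W x) x :=
  (hW.smooth.differentiable (by simp) x).hasDerivAt

theorem contDiff_deriv : ContDiff ℝ 1 (deriv W) :=
  ContDiff.deriv' (contDiff_infty.1 hW.smooth 2)

theorem deriv_neg (x : ℝ) : deriv W (-x) = -deriv W x := by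
  have h := deriv_comp_neg W x
  rw [show (fun y => W (-y)) = W from funext hW.even] at h
  rw [h, neg_neg]

theorem deriv_zero : deriv W 0 = 0 := by
  have h := hW.deriv_neg 0
  rw [neg_zero] at h
  linarith

theorem deriv_one : deriv W 1 = 0 := by
  refine IsLocalMin.deriv_eq_zero (Eventually.of_forall fun x => ?_)
  rw [(hW.eq_zero_iff 1).2 (Or.inl rfl)]
  exact hW.nonneg x

theorem mul_deriv_lt_mul_deriv {x y : ℝ} (hx : 0 < x) (hxy : x < y) (hy : y < 1) :
    y * deriv W x < x * deriv W y := by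
  have h := hW.mono ⟨hx, hxy.trans hy⟩ ⟨hx.trans hxy, hy⟩ hxy
  rw [div_lt_div_iff₀ hx (hx.trans hxy)] at h
  linarith

theorem deriv_nonpos_of_mem_Ioo {x : ℝ} (hx : x ∈ Ioo 0 1) : deriv W x ≤ 0 := by
  have hleft : Tendsto (fun y => y * deriv W x) (𝓝[<] 1) (𝓝 (deriv W x)) := by
    simpa using (tendsto_id'.2 (nhdsWithin_le_nhds (a := (1 : ℝ)))).mul_const (deriv W x)
  have hright : Tendsto (fun y => x * deriv W y) (𝓝[<] 1) (𝓝 (x * deriv W 1)) :=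
    ((hW.contDiff_deriv.continuous.tendsto 1).mono_left nhdsWithin_le_nhds).const_mul x
  rw [hW.deriv_one, mul_zero] at hright
  refine le_of_tendsto_of_tendsto hleft hright ?_
  filter_upwards [Ioo_mem_nhdsLT hx.2] with y hy
  exact (hW.mul_deriv_lt_mul_deriv hx.1 hy.1 hy.2).le

theorem deriv_neg_of_mem_Ioo {x : ℝ} (hx : x ∈ Ioo 0 1) : deriv W x < 0 := by
  obtain ⟨y, hxy, hy1⟩ := exists_between hx.2
  have hy := hx.1.trans hxy
  have hlt : y * deriv W x < 0 := (hW.mul_deriv_lt_mul_deriv hx.1 hxy hy1).trans_le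
    (mul_nonpos_of_nonneg_of_nonpos hx.1.le (hW.deriv_nonpos_of_mem_Ioo ⟨hy, hy1⟩))
  exact (pos_iff_neg_of_mul_neg hlt).1 hy

theorem deriv_nonpos_of_mem_Icc {x : ℝ} (hx : x ∈ Icc 0 1) : deriv W x ≤ 0 := by
  rcases hx.1.eq_or_lt with rfl | h0
  · exact hW.deriv_zero.le
  rcases hx.2.eq_or_lt with rfl | h1
  · exact hW.deriv_one.le
  · exact (hW.deriv_neg_of_mem_Ioo ⟨h0, h1⟩).le

theorem strictAntiOn : StrictAntiOn W (Icc 0 1) :=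
  strictAntiOn_of_deriv_neg (convex_Icc 0 1) hW.smooth.continuous.continuousOn fun x hx =>
    hW.deriv_neg_of_mem_Ioo (by rwa [interior_Icc] at hx)

theorem mul_deriv_lt_deriv_mul {t x : ℝ} (ht : 1 < t) (hx : x ∈ Ioo 0 1) (htx : t * x ≤ 1) :
    t * deriv W x < deriv W (t * x) := by
  rcases htx.eq_or_lt with h1 | h1
  · rw [h1, hW.deriv_one]
    exact mul_neg_of_pos_of_neg (one_pos.trans ht) (hW.deriv_neg_of_mem_Ioo hx)
  · have h := hW.mul_deriv_lt_mul_deriv hx.1 (lt_mul_of_one_lt_left hx.1 ht) h1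
    rw [mul_comm t x, mul_assoc] at h
    rw [mul_comm t x]
    exact lt_of_mul_lt_mul_left h hx.1.le

theorem deriv_mul_lt_mul_deriv {t x : ℝ} (ht : t ∈ Ioo 0 1) (hx : x ∈ Ioo 0 1) :
    deriv W (t * x) < t * deriv W x := by
  have h := hW.mul_deriv_lt_mul_deriv (mul_pos ht.1 hx.1) (mul_lt_of_lt_one_left hx.1 ht.2) hx.2
  rw [mul_comm t x, mul_assoc] at h
  rw [mul_comm t x]
  exact lt_of_mul_lt_mul_left h hx.1.le

theorem const_mul {c : ℝ} (hc : 0 < c) : IsDoubleWell (fun x => c * W x) where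
  smooth := contDiff_const.mul hW.smooth
  nonneg x := mul_nonneg hc.le (hW.nonneg x)
  eq_zero_iff x := by rw [mul_eq_zero, or_iff_right hc.ne', hW.eq_zero_iff]
  even x := by rw [hW.even]
  deriv2_pos_one := by
    rw [iteratedDeriv_const_mul_field]
    exact mul_pos hc hW.deriv2_pos_one
  deriv2_pos_neg_one := by
    rw [iteratedDeriv_const_mul_field]
    exact mul_pos hc hW.deriv2_pos_neg_one
  mono x hx y hy hxy := by
    simpa only [deriv_const_mul_field, mul_div_assoc] using
      mul_lt_mul_of_pos_left (hW.mono hx hy hxy) hc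
  anti x hx y hy hxy := by
    simpa only [deriv_const_mul_field, mul_div_assoc] using
      mul_lt_mul_of_pos_left (hW.anti hx hy hxy) hc

end IsDoubleWell

/-! ### Dirichlet profiles by shooting -/

/-- `φ` and `ψ` are the position and velocity, for times in `(-T, T)`, of a particle in the force
field `G` released from rest at `M` at time `0`. -/
structure IsRestSolution (G : ℝ → ℝ) (T M : ℝ) (φ ψ : ℝ → ℝ) : Prop where
  pos_zero : φ 0 = M
  vel_zero : ψ 0 = 0
  hasDerivAt_pos : ∀ t ∈ Ioo (-T) T, HasDerivAt φ (ψ t) t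
  hasDerivAt_vel : ∀ t ∈ Ioo (-T) T, HasDerivAt ψ (G (φ t)) t

section RestSolution

variable {G : ℝ → ℝ} {K : ℝ≥0} {T M : ℝ}

theorem lipschitzWith_newton (hG : LipschitzWith K G) (c d : ℝ) :
    LipschitzWith (max ‖c‖₊ (‖d‖₊ * K)) fun p : ℝ × ℝ => (c * p.2, d * G p.1) := by
  have h1 := (lipschitzWith_smul c).comp (LipschitzWith.prod_snd (α := ℝ) (β := ℝ))
  have h2 := (lipschitzWith_smul d).comp (hG.comp (LipschitzWith.prod_fst (α := ℝ) (β := ℝ)))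
  simpa using h1.prodMk h2

-- Measuring velocities in units of `(2 * T)⁻¹` makes the Picard–Lindelöf bound hold on all of
-- `[-T, T]`, because the bounded force contributes only a bounded amount on a large ball.
theorem isPicardLindelof_newton (hG : LipschitzWith K G) {C : ℝ≥0} (hC : ∀ x, |G x| ≤ C)
    (hT : 0 < T) (r : ℝ≥0) :
    ∃ a L : ℝ≥0, IsPicardLindelof (fun (_ : ℝ) (p : ℝ × ℝ) => ((2 * T)⁻¹ * p.2, 2 * T * G p.1))
      (⟨0, by constructor <;> linarith⟩ : Icc (-T) T) 0 a r L
      (max ‖(2 * T)⁻¹‖₊ (‖2 * T‖₊ * K)) := by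
  lift T to ℝ≥0 using hT.le
  refine ⟨2 * r + (2 * T) ^ 2 * C, (2 * r + (2 * T) ^ 2 * C) / (2 * T), .of_time_independent
    (fun p hp => ?_) (lipschitzWith_newton hG _ _).lipschitzOnWith ?_⟩
  · have hp2 : |p.2| ≤ _ := (norm_snd_le p).trans (mem_closedBall_zero_iff.1 hp)
    change max |(2 * T : ℝ)⁻¹ * p.2| |2 * T * G p.1| ≤ _
    rw [abs_mul, abs_mul, abs_of_pos (by positivity : 0 < (2 * T : ℝ)⁻¹),
      abs_of_pos (by positivity : 0 < (2 * T : ℝ))]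
    push_cast at hp2 ⊢
    refine max_le ?_ ?_
    · rw [inv_mul_eq_div]
      gcongr
    · calc 2 * T * |G p.1| ≤ 2 * T * C := by gcongr; exact hC p.1
        _ = (2 * T) ^ 2 * C / (2 * T) := by field_simp
        _ ≤ (2 * r + (2 * T) ^ 2 * C) / (2 * T) := by gcongr; simp
  · push_cast
    simp only [sub_zero, zero_sub, neg_neg, max_self]
    have hbound : (0 : ℝ) ≤ T ^ 2 * C := by positivity
    have hT' : (T : ℝ) ≠ 0 := hT.ne'
    calc ((2 * r + (2 * T) ^ 2 * C) / (2 * T) * T : ℝ) = r + 2 * T ^ 2 * C := by field_simp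
      _ ≤ 2 * r + (2 * T) ^ 2 * C - r := by nlinarith

theorem exists_isRestSolution_continuousOn (hG : LipschitzWith K G) {C : ℝ≥0}
    (hC : ∀ x, |G x| ≤ C) (hT : 0 < T) (r : ℝ≥0) :
    ∃ φ ψ : ℝ → ℝ → ℝ, (∀ M ∈ Icc (-r : ℝ) r, IsRestSolution G T M (φ M) (ψ M)) ∧
      ContinuousOn (uncurry φ) (Icc (-r : ℝ) r ×ˢ Icc (-T) T) := by
  obtain ⟨a, L, hPL⟩ := isPicardLindelof_newton hG hC hT r
  obtain ⟨α, hα, hcont⟩ := hPL.exists_forall_mem_closedBall_eq_hasDerivWithinAt_continuousOn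
  have hball : ∀ M ∈ Icc (-r : ℝ) r, ((M, 0) : ℝ × ℝ) ∈ closedBall 0 (r : ℝ) := fun M hM => by
    simpa [Prod.norm_def, abs_le] using hM
  have hderiv : ∀ M ∈ Icc (-r : ℝ) r, ∀ t ∈ Ioo (-T) T, HasDerivAt (fun t => α ((M, 0), t))
      ((2 * T)⁻¹ * (α ((M, 0), t)).2, 2 * T * G (α ((M, 0), t)).1) t := fun M hM t ht =>
    ((hα _ (hball M hM)).2 t (Ioo_subset_Icc_self ht)).hasDerivAt (Icc_mem_nhds ht.1 ht.2)
  refine ⟨fun M t => (α ((M, 0), t)).1, fun M t => (2 * T)⁻¹ * (α ((M, 0), t)).2,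
    fun M hM => ⟨?_, ?_, fun t ht => ?_, fun t ht => ?_⟩, ?_⟩
  · exact congr_arg Prod.fst (hα _ (hball M hM)).1
  · simp [show α ((M, 0), 0) = (M, 0) from (hα _ (hball M hM)).1]
  · exact (hderiv M hM t ht).fst
  · have hsnd : HasDerivAt (fun t => (α ((M, 0), t)).2) _ t := (hderiv M hM t ht).snd
    exact (hsnd.const_mul (2 * T)⁻¹).congr_deriv (by field_simp)
  · exact continuous_fst.comp_continuousOn (hcont.comp (by fun_prop)
      fun p hp => ⟨hball _ hp.1, hp.2⟩)

namespace IsRestSolution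

variable {φ ψ φ' ψ' : ℝ → ℝ}

theorem eqOn (hG : LipschitzWith K G) (h : IsRestSolution G T M φ ψ)
    (h' : IsRestSolution G T M φ' ψ') (hT : 0 < T) :
    EqOn (fun t => (φ t, ψ t)) (fun t => (φ' t, ψ' t)) (Ioo (-T) T) :=
  ODE_solution_unique_of_mem_Ioo (v := fun _ p => (1 * p.2, 1 * G p.1)) (s := fun _ => univ)
    (t₀ := 0) (fun _ _ => (lipschitzWith_newton hG 1 1).lipschitzOnWith) ⟨neg_neg_of_pos hT, hT⟩
    (fun t ht => ⟨by simpa using (h.hasDerivAt_pos t ht).prodMk (h.hasDerivAt_vel t ht), trivial⟩)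
    (fun t ht => ⟨by simpa using (h'.hasDerivAt_pos t ht).prodMk (h'.hasDerivAt_vel t ht), trivial⟩)
    (by simp [h.pos_zero, h.vel_zero, h'.pos_zero, h'.vel_zero])

theorem comp_neg (h : IsRestSolution G T M φ ψ) :
    IsRestSolution G T M (fun t => φ (-t)) (fun t => -ψ (-t)) where
  pos_zero := by simp [h.pos_zero]
  vel_zero := by simp [h.vel_zero]
  hasDerivAt_pos t ht := by
    have ht' : -t ∈ Ioo (-T) T := ⟨neg_lt_neg ht.2, neg_lt.1 ht.1⟩
    exact ((h.hasDerivAt_pos (-t) ht').comp t (hasDerivAt_neg t)).congr_deriv (by ring)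
  hasDerivAt_vel t ht := by
    have ht' : -t ∈ Ioo (-T) T := ⟨neg_lt_neg ht.2, neg_lt.1 ht.1⟩
    exact ((h.hasDerivAt_vel (-t) ht').comp t (hasDerivAt_neg t)).neg.congr_deriv (by ring)

end IsRestSolution

end RestSolution

namespace IsRestSolution

variable {G : ℝ → ℝ} {K : ℝ≥0} {T M R : ℝ} {φ ψ : ℝ → ℝ}

theorem even (h : IsRestSolution G T M φ ψ) (hG : LipschitzWith K G) (hT : 0 < T) {t : ℝ}
    (ht : t ∈ Ioo (-T) T) : φ (-t) = φ t ∧ -ψ (-t) = ψ t :=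
  Prod.mk_inj.1 (h.comp_neg.eqOn hG h hT ht)

theorem vel_nonpos (h : IsRestSolution G T M φ ψ) (hG : ∀ x, G x ≤ 0) {t : ℝ}
    (ht : t ∈ Ico 0 T) : ψ t ≤ 0 := by
  have hmem : ∀ s ∈ Ico 0 T, s ∈ Ioo (-T) T := fun s hs => ⟨by linarith [hs.1, hs.2], hs.2⟩
  have hanti : AntitoneOn ψ (Ico 0 T) := antitoneOn_of_hasDerivWithinAt_nonpos (convex_Ico 0 T)
    (fun s hs => (h.hasDerivAt_vel s (hmem s hs)).continuousAt.continuousWithinAt)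
    (fun s hs => (h.hasDerivAt_vel s (hmem s (interior_subset hs))).hasDerivWithinAt)
    (fun s _ => hG (φ s))
  exact (hanti ⟨le_rfl, ht.1.trans_lt ht.2⟩ ht ht.1).trans h.vel_zero.le

theorem pos_le (h : IsRestSolution G T M φ ψ) (hG : ∀ x, G x ≤ 0) {t : ℝ}
    (ht : t ∈ Ico 0 T) : φ t ≤ M := by
  have hmem : ∀ s ∈ Ico 0 T, s ∈ Ioo (-T) T := fun s hs => ⟨by linarith [hs.1, hs.2], hs.2⟩
  have hanti : AntitoneOn φ (Ico 0 T) := antitoneOn_of_hasDerivWithinAt_nonpos (convex_Ico 0 T)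
    (fun s hs => (h.hasDerivAt_pos s (hmem s hs)).continuousAt.continuousWithinAt)
    (fun s hs => (h.hasDerivAt_pos s (hmem s (interior_subset hs))).hasDerivWithinAt)
    (fun s hs => h.vel_nonpos hG (interior_subset hs))
  exact (hanti ⟨le_rfl, ht.1.trans_lt ht.2⟩ ht ht.1).trans h.pos_zero.le

theorem sq_vel_eq (h : IsRestSolution G T M φ ψ) (hR : R < T) {V : ℝ → ℝ}
    (hV : ∀ t ∈ Icc 0 R, HasDerivAt V (G (φ t)) (φ t)) {t : ℝ} (ht : t ∈ Icc 0 R) :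
    ψ t ^ 2 = 2 * (V (φ t) - V M) := by
  have henergy : ∀ s ∈ Icc 0 R, HasDerivAt (fun s => ψ s ^ 2 - 2 * V (φ s)) 0 s := fun s hs => by
    have hs' : s ∈ Ioo (-T) T := ⟨by linarith [hs.1, hs.2], by linarith [hs.2]⟩
    have hVφ := (hV s hs).comp s (h.hasDerivAt_pos s hs')
    exact (((h.hasDerivAt_vel s hs').pow 2).sub (hVφ.const_mul 2)).congr_deriv (by ring)
  have hconst := constant_of_has_deriv_right_zero (HasDerivAt.continuousOn henergy)
    (fun s hs => (henergy s (Ico_subset_Icc_self hs)).hasDerivWithinAt) t ht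
  simp only [h.pos_zero, h.vel_zero] at hconst
  linarith

-- Sturm comparison with the linear oscillator of frequency `κ`, whose quarter period is
-- `π / (2 * κ)`.
theorem exists_pos_nonpos (h : IsRestSolution G T M φ ψ) {κ : ℝ} (hκ : 0 < κ)
    (hT : π / (2 * κ) < T) (hG : ∀ t ∈ Icc 0 (π / (2 * κ)), 0 < φ t → G (φ t) ≤ -(κ ^ 2 * φ t)) :
    ∃ t ∈ Icc 0 (π / (2 * κ)), φ t ≤ 0 := by
  by_contra! hpos
  have hR : 0 ≤ π / (2 * κ) := by positivity
  have hmem : ∀ t ∈ Icc 0 (π / (2 * κ)), t ∈ Ioo (-T) T := fun t ht =>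
    ⟨by linarith [ht.1], by linarith [ht.2]⟩
  have hquarter : κ * (π / (2 * κ)) = π / 2 := by field_simp
  have hderiv : ∀ t ∈ Icc 0 (π / (2 * κ)),
      HasDerivAt (fun t => ψ t * cos (κ * t) + φ t * (κ * sin (κ * t)))
        ((G (φ t) + κ ^ 2 * φ t) * cos (κ * t)) t := fun t ht => by
    have hκt : HasDerivAt (fun t => κ * t) κ t := by simpa using (hasDerivAt_id t).const_mul κ
    exact (((h.hasDerivAt_vel t (hmem t ht)).mul hκt.cos).add
      ((h.hasDerivAt_pos t (hmem t ht)).mul (hκt.sin.const_mul κ))).congr_deriv (by ring)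
  have hanti := antitoneOn_of_hasDerivWithinAt_nonpos (convex_Icc 0 (π / (2 * κ)))
    (HasDerivAt.continuousOn hderiv)
    (fun t ht => (hderiv t (interior_subset ht)).hasDerivWithinAt) fun t ht => by
      have ht' := interior_subset ht
      have hκt : κ * t ≤ π / 2 := by rw [← hquarter]; exact mul_le_mul_of_nonneg_left ht'.2 hκ.le
      refine mul_nonpos_of_nonpos_of_nonneg (by linarith [hG t ht' (hpos t ht')])
        (cos_nonneg_of_mem_Icc ⟨?_, hκt⟩)
      linarith [mul_nonneg hκ.le ht'.1, pi_pos]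
  have hle := hanti ⟨le_rfl, hR⟩ ⟨hR, le_rfl⟩ hR
  simp only [hquarter, h.vel_zero, cos_pi_div_two, sin_pi_div_two, mul_zero, sin_zero, zero_mul,
    zero_add, add_zero, mul_one] at hle
  exact hle.not_gt (mul_pos (hpos _ ⟨hR, le_rfl⟩) hκ)

end IsRestSolution

/-- The force `W'` with its argument clamped to `[0, 1]`; unlike `W'` it is globally Lipschitz,
bounded and nonpositive. -/
noncomputable def clampedForce (W : ℝ → ℝ) (x : ℝ) : ℝ :=
  deriv W (projIcc 0 1 zero_le_one x)

theorem clampedForce_of_mem {W : ℝ → ℝ} {x : ℝ} (hx : x ∈ Icc 0 1) :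
    clampedForce W x = deriv W x := by
  rw [clampedForce, projIcc_of_mem zero_le_one hx]

namespace IsDoubleWell

variable {W : ℝ → ℝ} (hW : IsDoubleWell W)
include hW

theorem clampedForce_nonpos (x : ℝ) : clampedForce W x ≤ 0 :=
  hW.deriv_nonpos_of_mem_Icc (projIcc 0 1 zero_le_one x).2

theorem exists_lipschitzWith_clampedForce : ∃ K, LipschitzWith K (clampedForce W) := by
  obtain ⟨K, hK⟩ := hW.contDiff_deriv.contDiffOn.exists_lipschitzOnWith one_ne_zero
    (convex_Icc (0 : ℝ) 1) isCompact_Icc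
  exact ⟨K * 1, hK.to_restrict.comp (LipschitzWith.projIcc zero_le_one)⟩

theorem exists_abs_clampedForce_le : ∃ C : ℝ≥0, ∀ x, |clampedForce W x| ≤ C := by
  obtain ⟨C, hC⟩ := isCompact_Icc.exists_bound_of_continuousOn (s := Icc (0 : ℝ) 1)
    hW.contDiff_deriv.continuous.continuousOn
  exact ⟨C.toNNReal, fun x => (hC _ (projIcc 0 1 zero_le_one x).2).trans (le_coe_toNNReal C)⟩

variable {T M R : ℝ} {φ ψ : ℝ → ℝ}

theorem sq_vel_eq (h : IsRestSolution (clampedForce W) T M φ ψ) (hRT : R < T) (hM : M ≤ 1)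
    (hφ : ∀ t ∈ Icc 0 R, 0 ≤ φ t) {t : ℝ} (ht : t ∈ Icc 0 R) :
    ψ t ^ 2 = 2 * (W (φ t) - W M) := by
  refine h.sq_vel_eq hRT (fun s hs => ?_) ht
  rw [clampedForce_of_mem ⟨hφ s hs,
    (h.pos_le hW.clampedForce_nonpos ⟨hs.1, hs.2.trans_lt hRT⟩).trans hM⟩]
  exact hW.hasDerivAt _

theorem exists_pos_nonpos (h : IsRestSolution (clampedForce W) T M φ ψ) (hM : M ∈ Ioo 0 1) {κ : ℝ}
    (hκ : 0 < κ) (hT : π / (2 * κ) < T) (hκM : deriv W M ≤ -(κ ^ 2 * M)) :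
    ∃ t ∈ Icc 0 (π / (2 * κ)), φ t ≤ 0 := by
  refine h.exists_pos_nonpos hκ hT fun t ht hpos => ?_
  have hle : φ t ≤ M := h.pos_le hW.clampedForce_nonpos ⟨ht.1, ht.2.trans_lt hT⟩
  rw [clampedForce_of_mem ⟨hpos.le, hle.trans hM.2.le⟩]
  rcases hle.eq_or_lt with heq | hlt
  · rwa [heq]
  · refine le_of_mul_le_mul_left ?_ hM.1
    calc M * deriv W (φ t) ≤ φ t * deriv W M := (hW.mul_deriv_lt_mul_deriv hpos hlt hM.2).le
      _ ≤ φ t * -(κ ^ 2 * M) := mul_le_mul_of_nonneg_left hκM hpos.le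
      _ = M * -(κ ^ 2 * φ t) := by ring

-- By conservation of energy a trajectory staying nonnegative meets `0` transversally, so only at
-- the final time.
theorem eq_of_pos_eq_zero (h : IsRestSolution (clampedForce W) T M φ ψ) (hM : M ∈ Ioo 0 1)
    (hRT : R < T) (hφ : ∀ t ∈ Icc 0 R, 0 ≤ φ t) {t : ℝ} (ht : t ∈ Icc 0 R) (hφt : φ t = 0) :
    t = R := by
  by_contra hne
  have ht0 : 0 < t := ht.1.lt_of_ne fun heq =>
    hM.1.ne' (h.pos_zero.symm.trans ((congr_arg φ heq).trans hφt))
  have hmin : IsLocalMin φ t := by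
    filter_upwards [Icc_mem_nhds ht0 (ht.2.lt_of_ne hne)] with s hs
    exact hφt.trans_le (hφ s hs)
  have hvel := hmin.hasDerivAt_eq_zero
    (h.hasDerivAt_pos t ⟨by linarith [ht.2], ht.2.trans_lt hRT⟩)
  have henergy := hW.sq_vel_eq h hRT hM.2.le hφ ht
  rw [hvel, hφt] at henergy
  linarith [hW.strictAntiOn ⟨le_rfl, zero_le_one⟩ ⟨hM.1.le, hM.2.le⟩ hM.1]

theorem exists_shooting_height {φ ψ : ℝ → ℝ → ℝ} {M₀ : ℝ} (hM₀ : M₀ ∈ Ioo 0 1) (hRT : R < T)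
    (h : ∀ M ∈ Icc M₀ 1, IsRestSolution (clampedForce W) T M (φ M) (ψ M))
    (hcont : ContinuousOn (uncurry φ) (Icc M₀ 1 ×ˢ Icc 0 R)) (hM₀R : ∃ t ∈ Icc 0 R, φ M₀ t ≤ 0) :
    ∃ M ∈ Ico M₀ 1, φ M R = 0 ∧ ∀ t ∈ Ico 0 R, 0 < φ M t := by
  obtain ⟨K, hK⟩ := hW.exists_lipschitzWith_clampedForce
  have hone : IsRestSolution (clampedForce W) T 1 (fun _ => 1) (fun _ => 0) :=
    ⟨rfl, rfl, fun t _ => hasDerivAt_const t 1, fun t _ => by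
      rw [clampedForce_of_mem ⟨zero_le_one, le_rfl⟩, hW.deriv_one]
      exact hasDerivAt_const t 0⟩
  have hφone : ∀ t ∈ Icc 0 R, φ 1 t = 1 := fun t ht =>
    have hT : 0 < T := (ht.1.trans ht.2).trans_lt hRT
    congr_arg Prod.fst ((h 1 ⟨hM₀.2.le, le_rfl⟩).eqOn hK hone hT
      ⟨by linarith [ht.1], ht.2.trans_lt hRT⟩)
  obtain ⟨M, hM, hnonneg, t, ht, hφt⟩ := exists_first_touch isPreconnected_Icc isCompact_Icc hcont
    ⟨hM₀.2.le, le_rfl⟩ ⟨le_rfl, hM₀.2.le⟩ (fun t ht => by simp [hφone t ht]) hM₀R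
  have hM1 : M < 1 := hM.2.lt_of_ne fun heq => by
    subst heq
    exact one_ne_zero ((hφone t ht).symm.trans hφt)
  have honly : ∀ s ∈ Icc 0 R, φ M s = 0 → s = R := fun s hs =>
    hW.eq_of_pos_eq_zero (h M hM) ⟨hM₀.1.trans_le hM.1, hM1⟩ hRT hnonneg hs
  refine ⟨M, ⟨hM.1, hM1⟩, ?_, fun s hs => ?_⟩
  · rwa [← honly t ht hφt]
  · exact (hnonneg s ⟨hs.1, hs.2.le⟩).lt_of_ne fun heq => hs.2.ne (honly s ⟨hs.1, hs.2.le⟩ heq.symm)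

end IsDoubleWell

/-- `q` is a solution of `q'' = f q` on `[0, ℓ]` with values in `(0, 1)` in the interior and
vanishing at the endpoints, `p` is its derivative, and its slopes at `0` and `ℓ` are `s` and
`-s`. -/
structure IsDirichletProfile (f : ℝ → ℝ) (ℓ s : ℝ) (q p : ℝ → ℝ) : Prop where
  hasDerivAt : ∀ r ∈ Icc 0 ℓ, HasDerivAt q (p r) r
  hasDerivAt_slope : ∀ r ∈ Ioo 0 ℓ, HasDerivAt p (f (q r)) r
  mem_Ioo : ∀ r ∈ Ioo 0 ℓ, q r ∈ Ioo 0 1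
  zero_left : q 0 = 0
  zero_right : q ℓ = 0
  slope_left : p 0 = s
  slope_right : p ℓ = -s

namespace IsDoubleWell

variable {W : ℝ → ℝ} (hW : IsDoubleWell W)
include hW

theorem isDirichletProfile {T M R : ℝ} {φ ψ : ℝ → ℝ}
    (h : IsRestSolution (clampedForce W) T M φ ψ) (hM : M < 1) (hR : 0 < R) (hRT : R < T)
    (hφR : φ R = 0) (hφ : ∀ t ∈ Ico 0 R, 0 < φ t) :
    IsDirichletProfile (deriv W) (2 * R) √(2 * (W 0 - W M)) (fun r => φ (r - R))
      (fun r => ψ (r - R)) := by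
  obtain ⟨K, hK⟩ := hW.exists_lipschitzWith_clampedForce
  have hT : 0 < T := hR.trans hRT
  have hmem : ∀ r ∈ Icc 0 (2 * R), r - R ∈ Ioo (-T) T := fun r hr =>
    ⟨by linarith [hr.1], by linarith [hr.2]⟩
  have hsymm := h.even hK hT ⟨by linarith, hRT⟩
  have hnonneg : ∀ t ∈ Icc 0 R, 0 ≤ φ t := fun t ht =>
    ht.2.eq_or_lt.elim (fun heq => by rw [heq, hφR]) fun hlt => (hφ t ⟨ht.1, hlt⟩).le
  have hslope : ψ R = -√(2 * (W 0 - W M)) := by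
    rw [← hφR, ← hW.sq_vel_eq h hRT hM.le hnonneg ⟨hR.le, le_rfl⟩, sqrt_sq_eq_abs,
      abs_of_nonpos (h.vel_nonpos hW.clampedForce_nonpos ⟨hR.le, hRT⟩), neg_neg]
  have hIoo : ∀ r ∈ Ioo 0 (2 * R), φ (r - R) ∈ Ioo 0 1 := fun r hr => by
    have habs : |r - R| < R := abs_lt.2 ⟨by linarith [hr.1], by linarith [hr.2]⟩
    have heq : φ |r - R| = φ (r - R) := by
      rcases abs_choice (r - R) with hr' | hr' <;> rw [hr']
      exact (h.even hK hT (hmem r (Ioo_subset_Icc_self hr))).1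
    rw [← heq]
    exact ⟨hφ _ ⟨abs_nonneg _, habs⟩,
      (h.pos_le hW.clampedForce_nonpos ⟨abs_nonneg _, habs.trans hRT⟩).trans_lt hM⟩
  refine ⟨fun r hr => (h.hasDerivAt_pos _ (hmem r hr)).comp_sub_const r R, fun r hr => ?_, hIoo,
    ?_, ?_, ?_, ?_⟩
  · rw [← clampedForce_of_mem (Ioo_subset_Icc_self (hIoo r hr))]
    exact (h.hasDerivAt_vel _ (hmem r (Ioo_subset_Icc_self hr))).comp_sub_const r R
  · rw [zero_sub, hsymm.1, hφR]
  · rw [two_mul, add_sub_cancel_right, hφR]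
  · rw [zero_sub, ← neg_neg (ψ (-R)), hsymm.2, hslope, neg_neg]
  · rw [two_mul, add_sub_cancel_right, hslope]

theorem exists_shooting_family {T : ℝ} (hT : 0 < T) :
    ∃ φ ψ : ℝ → ℝ → ℝ, (∀ M ∈ Icc 0 1, IsRestSolution (clampedForce W) T M (φ M) (ψ M)) ∧
      ∀ M₀ ∈ Ioo (0 : ℝ) 1, ∀ R < T, (∃ t ∈ Icc 0 R, φ M₀ t ≤ 0) →
        ∃ M ∈ Ico M₀ 1, φ M R = 0 ∧ ∀ t ∈ Ico 0 R, 0 < φ M t := by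
  obtain ⟨K, hK⟩ := hW.exists_lipschitzWith_clampedForce
  obtain ⟨C, hC⟩ := hW.exists_abs_clampedForce_le
  obtain ⟨φ, ψ, hφ, hcont⟩ := exists_isRestSolution_continuousOn hK hC hT 1
  simp only [NNReal.coe_one] at hφ hcont
  have hsol : ∀ M ∈ Icc 0 1, IsRestSolution (clampedForce W) T M (φ M) (ψ M) := fun M hM =>
    hφ M ⟨by linarith [hM.1], hM.2⟩
  refine ⟨φ, ψ, hsol, fun M₀ hM₀ R hR => ?_⟩
  exact hW.exists_shooting_height hM₀ hR (fun M hM => hsol M ⟨hM₀.1.le.trans hM.1, hM.2⟩)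
    (hcont.mono (prod_mono (Icc_subset_Icc (by linarith [hM₀.1]) le_rfl)
      (Icc_subset_Icc (by linarith) hR.le)))

theorem exists_isDirichletProfile_lt {M₀ κ ℓ₁ ℓ₂ : ℝ} (hM₀ : M₀ ∈ Ioo 0 1) (hκ : 0 < κ)
    (hκM₀ : deriv W M₀ ≤ -(κ ^ 2 * M₀)) (hℓ₁ : π / κ ≤ ℓ₁) (hℓ : ℓ₁ < ℓ₂) :
    ∃ s₁ s₂ q₁ p₁ q₂ p₂, 0 ≤ s₁ ∧ s₁ < s₂ ∧ IsDirichletProfile (deriv W) ℓ₁ s₁ q₁ p₁ ∧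
      IsDirichletProfile (deriv W) ℓ₂ s₂ q₂ p₂ := by
  have hquarter : π / (2 * κ) ≤ ℓ₁ / 2 := by
    rw [mul_comm, ← div_div]
    exact div_le_div_of_nonneg_right hℓ₁ zero_le_two
  have hR₁ : 0 < ℓ₁ / 2 := lt_of_lt_of_le (by positivity) hquarter
  have hR₂ : ℓ₂ / 2 < ℓ₂ := by linarith
  obtain ⟨φ, ψ, hsol, hshoot⟩ := hW.exists_shooting_family (T := ℓ₂) (by linarith)
  obtain ⟨t, ht, hφt⟩ := hW.exists_pos_nonpos (hsol M₀ (Ioo_subset_Icc_self hM₀)) hM₀ hκ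
    (by linarith) hκM₀
  obtain ⟨M₁, hM₁, hzero₁, hpos₁⟩ := hshoot M₀ hM₀ (ℓ₁ / 2) (by linarith)
    ⟨t, ⟨ht.1, ht.2.trans hquarter⟩, hφt⟩
  have hM₁pos : 0 < M₁ := hM₀.1.trans_le hM₁.1
  obtain ⟨M₂, hM₂, hzero₂, hpos₂⟩ := hshoot M₁ ⟨hM₁pos, hM₁.2⟩ (ℓ₂ / 2) hR₂
    ⟨ℓ₁ / 2, ⟨hR₁.le, by linarith⟩, hzero₁.le⟩
  have hM : M₁ < M₂ := hM₂.1.lt_of_ne fun heq =>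
    (hpos₂ (ℓ₁ / 2) ⟨hR₁.le, by linarith⟩).ne' (heq ▸ hzero₁)
  have hmem₁ : M₁ ∈ Icc 0 1 := ⟨hM₁pos.le, hM₁.2.le⟩
  have hmem₂ : M₂ ∈ Icc 0 1 := ⟨hM₁pos.le.trans hM₂.1, hM₂.2.le⟩
  have hW₁ : W M₁ < W 0 := hW.strictAntiOn ⟨le_rfl, zero_le_one⟩ hmem₁ hM₁pos
  have hprof₁ := hW.isDirichletProfile (hsol M₁ hmem₁) hM₁.2 hR₁ (by linarith) hzero₁ hpos₁
  have hprof₂ := hW.isDirichletProfile (hsol M₂ hmem₂) hM₂.2 (by linarith) hR₂ hzero₂ hpos₂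
  rw [mul_div_cancel₀ _ two_ne_zero] at hprof₁ hprof₂
  exact ⟨_, _, _, _, _, _, sqrt_nonneg _,
    sqrt_lt_sqrt (by linarith) (by linarith [hW.strictAntiOn hmem₁ hmem₂ hM]), hprof₁, hprof₂⟩

end IsDoubleWell

/-! ### Suprema over hyperplanes as viscosity subsolutions -/

section ViscositySubsolution

/-- `U` is a viscosity subsolution of `U'' = f U` on `ℝ`; the second derivative `d` of the test
function `F` at the touching point is presented through its derivative `F'`. -/
def IsViscositySubsolution (f U : ℝ → ℝ) : Prop :=
  ∀ ⦃r d : ℝ⦄ ⦃F F' : ℝ → ℝ⦄, (∀ᶠ s in 𝓝 r, HasDerivAt F (F' s) s) → HasDerivAt F' d r →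
    U ≤ᶠ[𝓝 r] F → U r = F r → f (U r) ≤ d

namespace IsViscositySubsolution

variable {f U : ℝ → ℝ}

theorem comp_add_const (h : IsViscositySubsolution f U) (z : ℝ) :
    IsViscositySubsolution f fun r => U (r + z) := by
  intro r d F F' hF hF' hle heq
  have hshift : Tendsto (fun s => s - z) (𝓝 (r + z)) (𝓝 r) := by
    simpa using (continuous_sub_right z).tendsto (r + z)
  refine h (F := fun s => F (s - z)) (F' := fun s => F' (s - z))
    ((hshift.eventually hF).mono fun s hs => hs.comp_sub_const s z)
    (HasDerivAt.comp_sub_const (r + z) z (by simpa using hF')) ?_ (by simpa using heq)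
  filter_upwards [hshift.eventually hle] with s hs
  simpa using hs

-- A concave kink could be touched from above by parabolas of arbitrarily negative second
-- derivative.
theorem le_of_kink (h : IsViscositySubsolution f U) {F₁ F₂ : ℝ → ℝ} {r d₁ d₂ : ℝ}
    (hd₁ : HasDerivWithinAt F₁ d₁ (Iio r) r) (hd₂ : HasDerivWithinAt F₂ d₂ (Ioi r) r)
    (hle₁ : U ≤ᶠ[𝓝[<] r] F₁) (hle₂ : U ≤ᶠ[𝓝[>] r] F₂) (heq₁ : U r = F₁ r) (heq₂ : U r = F₂ r) :
    d₁ ≤ d₂ := by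
  by_contra! hlt
  let p := (d₁ + d₂) / 2
  let c := f (U r) - 1
  let F : ℝ → ℝ := fun s => U r + p * (s - r) + c / 2 * (s - r) ^ 2
  have hF : ∀ s, HasDerivAt F (p + c * (s - r)) s := fun s => by
    have hs : HasDerivAt (fun s => s - r) 1 s := (hasDerivAt_id s).sub_const r
    exact (((hs.const_mul p).const_add (U r)).add ((hs.pow 2).const_mul (c / 2))).congr_deriv
      (by ring)
  have hF' : HasDerivAt (fun s => p + c * (s - r)) c r := by
    simpa using (((hasDerivAt_id r).sub_const r).const_mul c).const_add p
  have hFr : F r = U r := by simp [F]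
  have hleft : U ≤ᶠ[𝓝[<] r] F := by
    filter_upwards [hle₁, eventually_nhdsLT_lt_of_hasDerivWithinAt
      (hd₁.sub (hF r).hasDerivWithinAt) (by simp only [p]; linarith)] with s hs hFs
    simp only [Pi.sub_apply, hFr, ← heq₁, sub_self] at hFs
    linarith
  have hright : U ≤ᶠ[𝓝[>] r] F := by
    filter_upwards [hle₂, eventually_nhdsGT_lt_of_hasDerivWithinAt
      ((hF r).hasDerivWithinAt.sub hd₂) (by simp only [p]; linarith)] with s hs hFs
    simp only [Pi.sub_apply, hFr, ← heq₂, sub_self] at hFs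
    linarith
  have hle : U ≤ᶠ[𝓝 r] F := by
    rw [← nhdsNE_sup_pure, ← nhdsLT_sup_nhdsGT]
    exact eventually_sup.2 ⟨eventually_sup.2 ⟨hleft, hright⟩, hFr.ge⟩
  have hf := h (Eventually.of_forall hF) hF' hle hFr.symm
  simp only [c] at hf
  linarith

end IsViscositySubsolution

end ViscositySubsolution

section Periodic

variable {ι : Type*}

theorem isCompact_setOf_forall_mem_Icc (a b : ι → ℝ) :
    IsCompact {x : EuclideanSpace ℝ ι | ∀ j, x j ∈ Icc (a j) (b j)} := by
  have hpi := (EuclideanSpace.equiv ι ℝ).toHomeomorph.isCompact_preimage.2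
    (isCompact_univ_pi fun j => isCompact_Icc (a := a j) (b := b j))
  convert hpi using 1
  ext x
  exact mem_univ_pi.symm

theorem exists_periodic_add_mem_Icc [DecidableEq ι] {α : Type*} {f : EuclideanSpace ℝ ι → α}
    {L : ι → ℝ} {s : Finset ι} (hL : ∀ j ∈ s, 0 < L j)
    (hf : ∀ j ∈ s, Periodic f (single j (L j))) (x : EuclideanSpace ℝ ι) :
    ∃ v, Periodic f v ∧ (∀ j ∈ s, (x + v) j ∈ Icc 0 (L j)) ∧ ∀ j ∉ s, v j = 0 := by
  let v : EuclideanSpace ℝ ι := ∑ j ∈ s, -⌊x j / L j⌋ • single j (L j)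
  have hv : ∀ j, v j = if j ∈ s then -(⌊x j / L j⌋ * L j) else 0 := fun j => by
    simp [v, Finset.sum_apply, Pi.single_apply, neg_ite]
  refine ⟨v, Finset.sum_induction _ (Periodic f) (fun _ _ => Periodic.add_period) (by simp)
    fun j hj => (hf j hj).zsmul _, fun j hj => ?_, fun j hj => by simp [hv, hj]⟩
  rw [PiLp.add_apply, hv, if_pos hj, ← sub_eq_add_neg]
  exact ⟨Int.sub_floor_div_mul_nonneg _ (hL j hj), (Int.sub_floor_div_mul_lt _ (hL j hj)).le⟩

end Periodic

section FiberSup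

variable {n : ℕ} {u : EuclideanSpace ℝ (Fin (n + 1)) → ℝ}

/-- The supremum of `u` over the hyperplane `{x | x 0 = r}`, as a function of `r`; it reduces a
lower bound on `lap u` to a one-dimensional inequality in the viscosity sense. -/
noncomputable def fiberSup (u : EuclideanSpace ℝ (Fin (n + 1)) → ℝ) (r : ℝ) : ℝ :=
  sSup (u '' {x | x 0 = r})

theorem image_fiber_eq (hper : ∀ j ≠ 0, Periodic u (single j 1)) (r : ℝ) :
    u '' {x | x 0 = r} = (fun x => u (x + r • single 0 1)) ''
      {x | ∀ j, x j ∈ Icc (0 : ℝ) (if j = 0 then 0 else 1)} := by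
  ext y
  constructor
  · rintro ⟨x, rfl, rfl⟩
    obtain ⟨v, hv, hmem, hv0⟩ := exists_periodic_add_mem_Icc (s := {0}ᶜ) (L := fun _ => 1)
      (fun _ _ => one_pos) (fun j hj => hper j (by simpa using hj)) x
    refine ⟨x + v - x 0 • single 0 1, fun j => ?_, by simpa using hv x⟩
    rcases eq_or_ne j 0 with rfl | hj
    · simp [hv0 0 (by simp)]
    · simpa [hj] using hmem j (by simpa using hj)
  · rintro ⟨x, hx, rfl⟩
    exact ⟨x + r • single 0 1, by simpa [le_antisymm_iff] using (hx 0).symm, rfl⟩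

theorem isCompact_image_fiber (hu : Continuous u) (hper : ∀ j ≠ 0, Periodic u (single j 1))
    (r : ℝ) : IsCompact (u '' {x | x 0 = r}) := by
  rw [image_fiber_eq hper]
  exact (isCompact_setOf_forall_mem_Icc _ _).image (by fun_prop)

theorem le_fiberSup (hu : Continuous u) (hper : ∀ j ≠ 0, Periodic u (single j 1))
    (x : EuclideanSpace ℝ (Fin (n + 1))) : u x ≤ fiberSup u (x 0) :=
  le_csSup (isCompact_image_fiber hu hper _).bddAbove ⟨x, rfl, rfl⟩

theorem exists_eq_fiberSup (hu : Continuous u) (hper : ∀ j ≠ 0, Periodic u (single j 1))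
    (r : ℝ) : ∃ x, x 0 = r ∧ u x = fiberSup u r :=
  (isCompact_image_fiber hu hper r).sSup_mem ⟨_, single 0 r, by simp, rfl⟩

theorem continuous_fiberSup (hu : Continuous u) (hper : ∀ j ≠ 0, Periodic u (single j 1)) :
    Continuous (fiberSup u) := by
  have hsup := (isCompact_setOf_forall_mem_Icc (fun _ : Fin (n + 1) => (0 : ℝ))
    (fun j => if j = 0 then 0 else 1)).continuous_sSup
    (f := fun (r : ℝ) x => u (x + r • single 0 (1 : ℝ)))
    (hu.comp (continuous_snd.add (continuous_fst.smul continuous_const)))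
  refine hsup.congr fun r => ?_
  rw [fiberSup, image_fiber_eq hper]

theorem hasDerivAt_secondDirDeriv (hu : ContDiff ℝ 2 u) (x : EuclideanSpace ℝ (Fin (n + 1)))
    (j : Fin (n + 1)) :
    HasDerivAt (deriv fun t : ℝ => u (x + t • single j 1)) (secondDirDeriv u x j) 0 := by
  have hline : ContDiff ℝ 2 fun t : ℝ => u (x + t • single j 1) := hu.comp (by fun_prop)
  rw [secondDirDeriv, iteratedDeriv_succ, iteratedDeriv_one]
  exact (hline.deriv'.differentiable one_ne_zero 0).hasDerivAt

theorem secondDirDeriv_le (hu : ContDiff ℝ 2 u) {x : EuclideanSpace ℝ (Fin (n + 1))}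
    {j : Fin (n + 1)} {F F' : ℝ → ℝ} {d : ℝ} (hF : ∀ᶠ t in 𝓝 0, HasDerivAt F (F' t) t)
    (hF' : HasDerivAt F' d 0) (hle : ∀ᶠ t : ℝ in 𝓝 0, u (x + t • single j 1) ≤ F t)
    (heq : u x = F 0) : secondDirDeriv u x j ≤ d := by
  have hline : Differentiable ℝ fun t : ℝ => u (x + t • single j 1) :=
    (hu.differentiable two_ne_zero).comp (by fun_prop)
  refine sub_nonpos.1 (nonpos_of_isLocalMax_of_hasDerivAt
    (hF.mono fun t ht => (hline t).hasDerivAt.sub ht)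
    ((hasDerivAt_secondDirDeriv hu x j).sub hF') ?_)
  filter_upwards [hle] with t ht
  simpa [heq] using ht

theorem isViscositySubsolution_fiberSup (hu : ContDiff ℝ 2 u)
    (hper : ∀ j ≠ 0, Periodic u (single j 1)) {f : ℝ → ℝ} (hf : ∀ x, f (u x) ≤ lap u x) :
    IsViscositySubsolution f (fiberSup u) := by
  intro r d F F' hF hF' hle heq
  obtain ⟨x, rfl, hx⟩ := exists_eq_fiberSup hu.continuous hper r
  have hshift : Tendsto (fun t : ℝ => x 0 + t) (𝓝 0) (𝓝 (x 0)) := by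
    simpa using (continuous_const_add (x 0)).tendsto 0
  have hzero : secondDirDeriv u x 0 ≤ d := by
    refine secondDirDeriv_le hu (F := fun t => F (x 0 + t)) (F' := fun t => F' (x 0 + t))
      ((hshift.eventually hF).mono fun t ht => ht.comp_const_add (x 0) t)
      (HasDerivAt.comp_const_add (x 0) 0 (by simpa using hF')) ?_ (by simp [hx, heq])
    filter_upwards [hshift.eventually hle] with t ht
    exact (le_fiberSup hu.continuous hper _).trans (by simpa using ht)
  have hrest : ∀ j : Fin n, secondDirDeriv u x j.succ ≤ 0 := fun j =>
    secondDirDeriv_le hu (F := fun _ => u x) (Eventually.of_forall fun t => hasDerivAt_const t _)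
      (hasDerivAt_const 0 0) (Eventually.of_forall fun t =>
        (le_fiberSup hu.continuous hper _).trans_eq (by simp [hx])) rfl
  calc f (fiberSup u (x 0)) = f (u x) := by rw [hx]
    _ ≤ lap u x := hf x
    _ = secondDirDeriv u x 0 + ∑ j : Fin n, secondDirDeriv u x j.succ := Fin.sum_univ_succ _
    _ ≤ d := by linarith [Finset.sum_nonpos fun j (_ : j ∈ Finset.univ) => hrest j]

end FiberSup

/-! ### Sweeping a barrier -/

namespace IsDirichletProfile

variable {f U q p : ℝ → ℝ} {ℓ s : ℝ}

theorem continuousOn (hq : IsDirichletProfile f ℓ s q p) : ContinuousOn q (Icc 0 ℓ) :=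
  HasDerivAt.continuousOn hq.hasDerivAt

theorem nonneg (hq : IsDirichletProfile f ℓ s q p) {r : ℝ} (hr : r ∈ Icc 0 ℓ) : 0 ≤ q r := by
  rcases hr.1.eq_or_lt with rfl | h0
  · exact hq.zero_left.ge
  rcases hr.2.eq_or_lt with rfl | h1
  · exact hq.zero_right.ge
  · exact (hq.mem_Ioo r ⟨h0, h1⟩).1.le

theorem le_of_touch (hq : IsDirichletProfile f ℓ s q p) (hU : IsViscositySubsolution f U)
    {r c : ℝ} (hr : r + c ∈ Ioo 0 ℓ) (t : ℝ) (hle : U ≤ᶠ[𝓝 r] fun x => t * q (x + c))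
    (heq : U r = t * q (r + c)) : f (U r) ≤ t * f (q (r + c)) := by
  refine hU (F' := fun x => t * p (x + c)) ?_
    (((hq.hasDerivAt_slope _ hr).comp_add_const r c).const_mul t) hle heq
  have hnear : ∀ᶠ x in 𝓝 r, x + c ∈ Ioo 0 ℓ :=
    (continuous_add_const c).tendsto r (isOpen_Ioo.mem_nhds hr)
  filter_upwards [hnear] with x hx
  exact ((hq.hasDerivAt _ (Ioo_subset_Icc_self hx)).comp_add_const x c).const_mul t

end IsDirichletProfile

/-- The barrier on `[-ℓ₁, ℓ₂]` obtained by gluing at `0` the bump `t * q₁` on `[-ℓ₁, 0]` to the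
dip `-t' * q₂` on `[0, ℓ₂]`, for Dirichlet profiles `q₁`, `q₂` of lengths `ℓ₁`, `ℓ₂`. -/
def kinkBarrier (q₁ q₂ : ℝ → ℝ) (ℓ₁ t t' r : ℝ) : ℝ :=
  t * q₁ (min r 0 + ℓ₁) - t' * q₂ (max r 0)

theorem kinkBarrier_of_nonpos {q₁ q₂ : ℝ → ℝ} {ℓ₁ r : ℝ} (hq₂ : q₂ 0 = 0) (hr : r ≤ 0)
    (t t' : ℝ) : kinkBarrier q₁ q₂ ℓ₁ t t' r = t * q₁ (r + ℓ₁) := by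
  rw [kinkBarrier, min_eq_left hr, max_eq_right hr, hq₂, mul_zero, sub_zero]

theorem kinkBarrier_of_nonneg {q₁ q₂ : ℝ → ℝ} {ℓ₁ r : ℝ} (hq₁ : q₁ ℓ₁ = 0) (hr : 0 ≤ r)
    (t t' : ℝ) : kinkBarrier q₁ q₂ ℓ₁ t t' r = -t' * q₂ r := by
  rw [kinkBarrier, min_eq_right hr, max_eq_left hr, zero_add, hq₁, mul_zero, zero_sub, neg_mul]

/-- The amplitudes `t`, `t'` are such that the graph of `U` can touch the barrier with these
amplitudes from below neither at its ends nor at its kink nor on its dip. -/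
structure IsSweepParameter (U : ℝ → ℝ) (ℓ₁ ℓ₂ s₁ s₂ t t' : ℝ) : Prop where
  one_lt : 1 < t
  mem_Ico : t' ∈ Ico 0 1
  left_neg : U (-ℓ₁) < 0
  right_neg : U ℓ₂ < 0
  kink : (∀ r ∈ Icc 0 ℓ₂, U r < 0) ∨ (0 < t' ∧ t * s₁ < t' * s₂)

theorem exists_one_add_mul_lt_one_sub_mul {a b : ℝ} (ha : 0 ≤ a) (hab : a < b) :
    ∃ κ ∈ Ioo (0 : ℝ) 1, (1 + κ) * a < (1 - κ) * b := by
  have hpos : 0 < a + b := by linarith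
  refine ⟨(b - a) / (2 * (a + b)), ⟨div_pos (sub_pos.2 hab) (by positivity), ?_⟩, ?_⟩
  · rw [div_lt_one (by positivity)]
    linarith
  · have hmul : (b - a) / (2 * (a + b)) * (a + b) = (b - a) / 2 := by field_simp
    linarith

section Sweep

variable {W U q₁ p₁ q₂ p₂ : ℝ → ℝ} {ℓ₁ ℓ₂ s₁ s₂ : ℝ}

theorem IsDoubleWell.ne_mul_profile (hW : IsDoubleWell W)
    (hU : IsViscositySubsolution (deriv W) U) {q p : ℝ → ℝ} {ℓ s r c t : ℝ}
    (hq : IsDirichletProfile (deriv W) ℓ s q p) (hU1 : U r ≤ 1) (ht : 1 < t)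
    (hr : r + c ∈ Ioo 0 ℓ) (hle : U ≤ᶠ[𝓝 r] fun x => t * q (x + c)) : U r ≠ t * q (r + c) := by
  intro heq
  have htouch := hq.le_of_touch hU hr t hle heq
  rw [heq] at htouch hU1
  exact htouch.not_gt (hW.mul_deriv_lt_deriv_mul ht (hq.mem_Ioo _ hr) hU1)

theorem IsDoubleWell.ne_neg_mul_profile (hW : IsDoubleWell W)
    (hU : IsViscositySubsolution (deriv W) U) {q p : ℝ → ℝ} {ℓ s r t : ℝ}
    (hq : IsDirichletProfile (deriv W) ℓ s q p) (ht : t ∈ Ioo 0 1) (hr : r ∈ Ioo 0 ℓ)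
    (hle : U ≤ᶠ[𝓝 r] fun x => -t * q x) : U r ≠ -t * q r := by
  intro heq
  have htouch := hq.le_of_touch hU (c := 0) (by simpa using hr) (-t) (by simpa using hle)
    (by simpa using heq)
  rw [heq, add_zero, neg_mul, neg_mul, hW.deriv_neg, neg_le_neg_iff] at htouch
  exact htouch.not_gt (hW.deriv_mul_lt_mul_deriv ht (hq.mem_Ioo r hr))

variable (hW : IsDoubleWell W) (hU : IsViscositySubsolution (deriv W) U) (hU1 : ∀ r, U r ≤ 1)
  (hUc : Continuous U) (hq₁ : IsDirichletProfile (deriv W) ℓ₁ s₁ q₁ p₁)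
  (hq₂ : IsDirichletProfile (deriv W) ℓ₂ s₂ q₂ p₂) (hℓ₁ : 0 < ℓ₁) (hℓ₂ : 0 < ℓ₂)
  {δ : ℝ} (hδ : 0 < δ) (hδℓ : 3 * δ ≤ ℓ₂)
  (hleft : ∀ r ∈ Icc (-(2 * δ) - ℓ₁) (3 * δ - ℓ₁), U r < 0)
  (hright : ∀ r ∈ Icc δ (2 * δ + ℓ₂), U r < 0)

include hδ hδℓ hleft hright in
theorem isSweepParameter_of_abs_le {t t' z : ℝ} (ht : 1 < t) (ht' : t' ∈ Ico 0 1)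
    (hz : |z| ≤ 2 * δ) (hkink : z = 2 * δ ∨ (0 < t' ∧ t * s₁ < t' * s₂)) :
    IsSweepParameter (fun r => U (r + z)) ℓ₁ ℓ₂ s₁ s₂ t t' := by
  obtain ⟨hz₁, hz₂⟩ := abs_le.1 hz
  exact ⟨ht, ht', hleft _ ⟨by linarith, by linarith⟩, hright _ ⟨by linarith, by linarith⟩,
    hkink.imp_left fun hz r hr => hright _ ⟨by linarith [hr.1], by linarith [hr.2]⟩⟩

include hU1 hq₁ hδ hleft hright in
theorem exists_lt_kinkBarrier (hq₂ : q₂ 0 = 0) :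
    ∃ t, 1 < t ∧ ∀ r ∈ Icc (-ℓ₁) ℓ₂, U (r + 2 * δ) < kinkBarrier q₁ q₂ ℓ₁ t 0 r := by
  have hsub : Icc δ (ℓ₁ - δ) ⊆ Ioo 0 ℓ₁ := fun r hr => ⟨by linarith [hr.1], by linarith [hr.2]⟩
  obtain ⟨c, hc, hcq⟩ := isCompact_Icc.exists_forall_le'
    (hq₁.continuousOn.mono (hsub.trans Ioo_subset_Icc_self)) fun r hr => (hq₁.mem_Ioo r (hsub hr)).1
  have ht : 0 < 1 + c⁻¹ := by positivity
  refine ⟨1 + c⁻¹, by simpa using hc, fun r hr => ?_⟩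
  rcases le_or_gt r 0 with hr0 | hr0
  · rw [kinkBarrier_of_nonpos hq₂ hr0]
    have hmem : r + ℓ₁ ∈ Icc 0 ℓ₁ := ⟨by linarith [hr.1], by linarith⟩
    by_cases hmid : r + ℓ₁ ∈ Icc δ (ℓ₁ - δ)
    · calc U (r + 2 * δ) ≤ 1 := hU1 _
        _ < (1 + c⁻¹) * c := by rw [add_mul, one_mul, inv_mul_cancel₀ hc.ne']; linarith
        _ ≤ (1 + c⁻¹) * q₁ (r + ℓ₁) := by gcongr; exact hcq _ hmid
    · refine lt_of_lt_of_le ?_ (mul_nonneg ht.le (hq₁.nonneg hmem))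
      rcases lt_or_ge (r + ℓ₁) δ with hlow | hlow
      · exact hleft _ ⟨by linarith [hr.1], by linarith⟩
      · have hhigh : ℓ₁ - δ < r + ℓ₁ := lt_of_not_ge fun h => hmid ⟨hlow, h⟩
        exact hright _ ⟨by linarith, by linarith [hr.2]⟩
  · rw [kinkBarrier_of_nonneg hq₁.zero_right hr0.le, neg_zero, zero_mul]
    exact hright _ ⟨by linarith, by linarith [hr.2]⟩

include hU hq₁ hq₂ hℓ₁ hℓ₂ in
theorem IsViscositySubsolution.mul_slope_le_of_touch_kink {t t' : ℝ}
    (hle : ∀ r ∈ Icc (-ℓ₁) ℓ₂, U r ≤ kinkBarrier q₁ q₂ ℓ₁ t t' r) (h0 : U 0 = 0) :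
    t' * s₂ ≤ t * s₁ := by
  have hd₁ : HasDerivAt (fun r => t * q₁ (r + ℓ₁)) (t * -s₁) 0 := by
    rw [← hq₁.slope_right]
    refine (HasDerivAt.comp_add_const 0 ℓ₁ ?_).const_mul t
    rw [zero_add]
    exact hq₁.hasDerivAt ℓ₁ ⟨hℓ₁.le, le_rfl⟩
  have hd₂ : HasDerivAt (fun r => -t' * q₂ r) (-t' * s₂) 0 := by
    rw [← hq₂.slope_left]
    exact (hq₂.hasDerivAt 0 ⟨le_rfl, hℓ₂.le⟩).const_mul (-t')
  have hkink := hU.le_of_kink hd₁.hasDerivWithinAt hd₂.hasDerivWithinAt ?_ ?_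
    (by simp [h0, hq₁.zero_right]) (by simp [h0, hq₂.zero_left])
  · linarith
  · filter_upwards [Ioo_mem_nhdsLT (neg_neg_of_pos hℓ₁)] with r hr
    rw [← kinkBarrier_of_nonpos hq₂.zero_left hr.2.le t t']
    exact hle r ⟨hr.1.le, hr.2.le.trans hℓ₂.le⟩
  · filter_upwards [Ioo_mem_nhdsGT hℓ₂] with r hr
    rw [← kinkBarrier_of_nonneg hq₁.zero_right hr.1.le t t']
    exact hle r ⟨by linarith [hr.1], hr.2.le⟩

include hW hU hU1 hq₁ hq₂ hℓ₁ hℓ₂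

theorem IsViscositySubsolution.ne_kinkBarrier {t t' : ℝ}
    (hpar : IsSweepParameter U ℓ₁ ℓ₂ s₁ s₂ t t')
    (hle : ∀ r ∈ Icc (-ℓ₁) ℓ₂, U r ≤ kinkBarrier q₁ q₂ ℓ₁ t t' r) {r : ℝ}
    (hr : r ∈ Icc (-ℓ₁) ℓ₂) : U r ≠ kinkBarrier q₁ q₂ ℓ₁ t t' r := by
  intro heq
  rcases hr.1.eq_or_lt with rfl | hr₁
  · refine hpar.left_neg.ne ?_
    rw [heq, kinkBarrier_of_nonpos hq₂.zero_left (neg_nonpos.2 hℓ₁.le), neg_add_cancel,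
      hq₁.zero_left, mul_zero]
  rcases hr.2.eq_or_lt with rfl | hr₂
  · refine hpar.right_neg.ne ?_
    rw [heq, kinkBarrier_of_nonneg hq₁.zero_right hℓ₂.le, hq₂.zero_right, mul_zero]
  have hnear : U ≤ᶠ[𝓝 r] kinkBarrier q₁ q₂ ℓ₁ t t' := by
    filter_upwards [Icc_mem_nhds hr₁ hr₂] using hle
  rcases lt_trichotomy r 0 with hneg | rfl | hpos
  · rw [kinkBarrier_of_nonpos hq₂.zero_left hneg.le] at heq
    refine hW.ne_mul_profile hU hq₁ (hU1 r) hpar.one_lt ⟨by linarith, by linarith⟩ ?_ heq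
    filter_upwards [hnear, Iio_mem_nhds hneg] with x hx hx0
    rwa [kinkBarrier_of_nonpos hq₂.zero_left hx0.le] at hx
  · rw [kinkBarrier_of_nonneg hq₁.zero_right le_rfl, hq₂.zero_left, mul_zero] at heq
    rcases hpar.kink with hneg | ⟨-, hlt⟩
    · exact (hneg 0 ⟨le_rfl, hr.2⟩).ne heq
    · exact (hU.mul_slope_le_of_touch_kink hq₁ hq₂ hℓ₁ hℓ₂ hle heq).not_gt hlt
  · rw [kinkBarrier_of_nonneg hq₁.zero_right hpos.le] at heq
    have ht' : 0 < t' := by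
      rcases hpar.kink with hneg | ⟨ht', -⟩
      · refine hpar.mem_Ico.1.lt_of_ne' fun ht' => (hneg r ⟨hpos.le, hr.2⟩).ne ?_
        rw [heq, ht', neg_zero, zero_mul]
      · exact ht'
    refine hW.ne_neg_mul_profile hU hq₂ ⟨ht', hpar.mem_Ico.2⟩ ⟨hpos, hr₂⟩ ?_ heq
    filter_upwards [hnear, Ioi_mem_nhds hpos] with x hx hx0
    rwa [kinkBarrier_of_nonneg hq₁.zero_right hx0.le] at hx

include hUc

theorem IsViscositySubsolution.lt_kinkBarrier_of_isPreconnected {S : Set (ℝ × ℝ × ℝ)}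
    (hS : IsPreconnected S)
    (hpar : ∀ a ∈ S, IsSweepParameter (fun r => U (r + a.2.2)) ℓ₁ ℓ₂ s₁ s₂ a.1 a.2.1)
    {a b : ℝ × ℝ × ℝ} (ha : a ∈ S) (hb : b ∈ S)
    (hlt : ∀ r ∈ Icc (-ℓ₁) ℓ₂, U (r + a.2.2) < kinkBarrier q₁ q₂ ℓ₁ a.1 a.2.1 r) :
    ∀ r ∈ Icc (-ℓ₁) ℓ₂, U (r + b.2.2) < kinkBarrier q₁ q₂ ℓ₁ b.1 b.2.1 r := by
  by_contra! hnot
  have hcont₁ : ContinuousOn (fun r => q₁ (min r 0 + ℓ₁)) (Icc (-ℓ₁) ℓ₂) :=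
    hq₁.continuousOn.comp (by fun_prop) fun r hr =>
      ⟨by linarith [le_min hr.1 (neg_nonpos.2 hℓ₁.le)], by linarith [min_le_right r 0]⟩
  have hcont₂ : ContinuousOn (fun r => q₂ (max r 0)) (Icc (-ℓ₁) ℓ₂) :=
    hq₂.continuousOn.comp (by fun_prop) fun r hr => ⟨le_max_right _ _, max_le hr.2 hℓ₂.le⟩
  have hsnd : MapsTo Prod.snd (S ×ˢ Icc (-ℓ₁) ℓ₂) (Icc (-ℓ₁) ℓ₂) := fun _ hx => hx.2
  have hD : ContinuousOn (fun x : (ℝ × ℝ × ℝ) × ℝ =>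
      kinkBarrier q₁ q₂ ℓ₁ x.1.1 x.1.2.1 x.2 - U (x.2 + x.1.2.2)) (S ×ˢ Icc (-ℓ₁) ℓ₂) :=
    (((by fun_prop : Continuous fun x : (ℝ × ℝ × ℝ) × ℝ => x.1.1).continuousOn.mul
      (hcont₁.comp continuousOn_snd hsnd)).sub
      ((by fun_prop : Continuous fun x : (ℝ × ℝ × ℝ) × ℝ => x.1.2.1).continuousOn.mul
      (hcont₂.comp continuousOn_snd hsnd))).sub (by fun_prop)
  obtain ⟨c, hcS, hnonneg, r, hr, hzero⟩ := exists_first_touch hS isCompact_Icc hD ha hb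
    (fun r hr => sub_pos.2 (hlt r hr)) (by simpa only [sub_nonpos] using hnot)
  exact (hU.comp_add_const c.2.2).ne_kinkBarrier hW (fun r => hU1 _) hq₁ hq₂ hℓ₁ hℓ₂ (hpar c hcS)
    (fun x hx => sub_nonneg.1 (hnonneg x hx)) hr (sub_eq_zero.1 hzero).symm

include hδ hδℓ hleft hright

-- With its kink at `2 * δ`, the barrier is first lowered until it is steeper on the side of the
-- dip, and then slid to the left until its dip covers `[-δ, δ]`.
theorem IsViscositySubsolution.neg_of_mem_Icc (hs₁ : 0 ≤ s₁) (hs : s₁ < s₂) :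
    ∀ r ∈ Icc (-δ) δ, U r < 0 := by
  obtain ⟨κ, ⟨hκ, hκ1⟩, hκs⟩ := exists_one_add_mul_lt_one_sub_mul hs₁ hs
  have hpar {t t' z : ℝ} := isSweepParameter_of_abs_le (s₁ := s₁) (s₂ := s₂) hδ hδℓ hleft hright
    (t := t) (t' := t') (z := z)
  obtain ⟨t, ht, hstart⟩ := exists_lt_kinkBarrier hU1 hq₁ hδ hleft hright hq₂.zero_left
  have hshrink := hU.lt_kinkBarrier_of_isPreconnected hW hU1 hUc hq₁ hq₂ hℓ₁ hℓ₂
    (S := Ioi 1 ×ˢ Ico 0 1 ×ˢ {2 * δ}) (a := (t, 0, 2 * δ)) (b := (1 + κ, 1 - κ, 2 * δ))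
    (isPreconnected_Ioi.prod (isPreconnected_Ico.prod isPreconnected_singleton))
    (fun a ha => hpar ha.1 ha.2.1 (by rw [ha.2.2, abs_of_nonneg (by positivity)]) (.inl ha.2.2))
    (by simpa using ht) (by simp [hκ, hκ1.le]) hstart
  intro y hy
  have hslide := hU.lt_kinkBarrier_of_isPreconnected hW hU1 hUc hq₁ hq₂ hℓ₁ hℓ₂
    (S := {1 + κ} ×ˢ {1 - κ} ×ˢ Icc (-(2 * δ)) (2 * δ)) (b := (1 + κ, 1 - κ, -(2 * δ)))
    (isPreconnected_singleton.prod (isPreconnected_singleton.prod isPreconnected_Icc))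
    (fun a ha => hpar (by rw [ha.1]; linarith) (by rw [ha.2.1]; constructor <;> linarith)
      (abs_le.2 ha.2.2) (.inr (by rw [ha.1, ha.2.1]; exact ⟨by linarith, hκs⟩)))
    (by simp [hδ.le]) (by simp [hδ.le]) hshrink (y + 2 * δ)
    ⟨by linarith [hy.1], by linarith [hy.2]⟩
  rw [kinkBarrier_of_nonneg hq₁.zero_right (by linarith [hy.1])] at hslide
  have hdip : 0 ≤ (1 - κ) * q₂ (y + 2 * δ) :=
    mul_nonneg (by linarith) (hq₂.nonneg ⟨by linarith [hy.1], by linarith [hy.2]⟩)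
  simp only [add_neg_cancel_right] at hslide
  linarith

end Sweep

/-! ### Phase transitions with converging nodal sets -/

theorem IsDoubleWell.eventually_exists_isDirichletProfile_lt {W : ℝ → ℝ} (hW : IsDoubleWell W)
    {ℓ₁ ℓ₂ : ℝ} (hℓ₁ : 0 < ℓ₁) (hℓ : ℓ₁ < ℓ₂) :
    ∀ᶠ ε in 𝓝[>] (0 : ℝ), ∃ s₁ s₂ q₁ p₁ q₂ p₂, 0 ≤ s₁ ∧ s₁ < s₂ ∧
      IsDirichletProfile (deriv fun x => (ε ^ 2)⁻¹ * W x) ℓ₁ s₁ q₁ p₁ ∧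
      IsDirichletProfile (deriv fun x => (ε ^ 2)⁻¹ * W x) ℓ₂ s₂ q₂ p₂ := by
  have hhalf : (1 / 2 : ℝ) ∈ Ioo 0 1 := by norm_num
  let κ := √(-(2 * deriv W (1 / 2)))
  have hneg : 0 < -(2 * deriv W (1 / 2)) := by linarith [hW.deriv_neg_of_mem_Ioo hhalf]
  have hκ : 0 < κ := Real.sqrt_pos.2 hneg
  have hκsq : κ ^ 2 = -(2 * deriv W (1 / 2)) := Real.sq_sqrt hneg.le
  filter_upwards [Ioo_mem_nhdsGT (show 0 < ℓ₁ * κ / π by positivity)] with ε hε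
  have hε2 : 0 < (ε ^ 2)⁻¹ := by have := hε.1; positivity
  refine (hW.const_mul hε2).exists_isDirichletProfile_lt hhalf (div_pos hκ hε.1) ?_ ?_ hℓ
  · rw [deriv_const_mul_field, div_pow, hκsq]
    exact le_of_eq (by ring)
  · rw [div_div_eq_mul_div, div_le_iff₀ hκ]
    linarith [(lt_div_iff₀ pi_pos).1 hε.2]

section PhaseTransition

variable {n : ℕ} {W : ℝ → ℝ}

namespace IsPhaseTransitionTorus

variable {ε : ℝ} {u : EuclideanSpace ℝ (Fin (n + 1)) → ℝ}

theorem neg (hu : IsPhaseTransitionTorus W ε u) (hW : IsDoubleWell W) :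
    IsPhaseTransitionTorus W ε fun x => -u x where
  smooth := hu.smooth.neg
  mem_Icc x := neg_mem_Icc_iff.2 (by simpa using hu.mem_Icc x)
  periodic_first x := congrArg Neg.neg (hu.periodic_first x)
  periodic_rest j hj x := congrArg Neg.neg (hu.periodic_rest j hj x)
  pde x := by
    have hlap : lap (fun x => -u x) x = -lap u x := by
      simp only [lap, secondDirDeriv, iteratedDeriv_fun_neg, Finset.sum_neg_distrib]
    rw [hlap, hW.deriv_neg, mul_neg, hu.pde]

theorem isViscositySubsolution_fiberSup (hu : IsPhaseTransitionTorus W ε u) (hε : ε ≠ 0) :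
    IsViscositySubsolution (deriv fun x => (ε ^ 2)⁻¹ * W x) (fiberSup u) := by
  refine _root_.isViscositySubsolution_fiberSup (contDiff_infty.1 hu.smooth 2)
    hu.periodic_rest fun x => ?_
  rw [deriv_const_mul_field, ← hu.pde, inv_mul_cancel_left₀ (pow_ne_zero 2 hε)]

end IsPhaseTransitionTorus

theorem IsDoubleWell.eventually_neg_near (hW : IsDoubleWell W) {a₀ a b c : ℝ} (ha₀ : a₀ < a)
    (hab : a ≤ b) (hgap : b - a < c - b) :
    ∀ᶠ δ in 𝓝[>] (0 : ℝ), ∀ᶠ ε in 𝓝[>] (0 : ℝ), ∀ u : EuclideanSpace ℝ (Fin (n + 1)) → ℝ,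
      IsPhaseTransitionTorus W ε u → (∀ x, x 0 ∈ Icc (a₀ + δ) (a - δ) → u x < 0) →
      (∀ x, x 0 ∈ Icc (b + δ) (c - δ) → u x < 0) → ∀ x, |x 0 - b| ≤ δ → u x < 0 := by
  obtain ⟨η, hη0, hη⟩ := exists_between (lt_min (sub_pos.2 ha₀) (sub_pos.2 hgap))
  obtain ⟨hηa, hηc⟩ := lt_min_iff.1 hη
  filter_upwards [Ioo_mem_nhdsGT (show 0 < η / 16 by positivity)] with δ hδ
  filter_upwards [hW.eventually_exists_isDirichletProfile_lt (ℓ₁ := b - a + η / 4)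
    (ℓ₂ := b - a + η / 2) (by linarith) (by linarith), self_mem_nhdsWithin]
    with ε ⟨s₁, s₂, q₁, p₁, q₂, p₂, hs₁, hs, hq₁, hq₂⟩ hε u hu hleft hright x hx
  have hε0 : ε ≠ 0 := (mem_Ioi.1 hε).ne'
  have hcont := hu.smooth.continuous
  have hsup {r : ℝ} : ∃ x, x 0 = r ∧ u x = fiberSup u r :=
    exists_eq_fiberSup hcont hu.periodic_rest r
  have hneg := ((hu.isViscositySubsolution_fiberSup hε0).comp_add_const b).neg_of_mem_Icc
    (hW.const_mul (inv_pos.2 (by positivity))) (δ := δ) (fun r => ?_)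
    ((continuous_fiberSup hcont hu.periodic_rest).comp (continuous_add_const b)) hq₁ hq₂
    (by linarith) (by linarith) hδ.1 (by linarith [hδ.2]) (fun r hr => ?_) (fun r hr => ?_) hs₁ hs
    (x 0 - b) (abs_le.1 hx)
  · rw [sub_add_cancel] at hneg
    exact (le_fiberSup hcont hu.periodic_rest x).trans_lt hneg
  all_goals obtain ⟨y, hy, hyr⟩ := hsup (r := r + b); rw [← hyr]
  · exact (hu.mem_Icc y).2
  · exact hleft y ⟨by linarith [hr.1, hδ.2], by linarith [hr.2, hδ.2]⟩
  · exact hright y ⟨by linarith [hr.1], by linarith [hr.2, hδ.2]⟩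

theorem neg_of_isPreconnected_of_ne_zero {X : Type*} [TopologicalSpace X] {s : Set X} {f : X → ℝ}
    (hs : IsPreconnected s) (hf : ContinuousOn f s) (hne : ∀ x ∈ s, f x ≠ 0) {y : X} (hy : y ∈ s)
    (hneg : f y < 0) : ∀ x ∈ s, f x < 0 := by
  by_contra! hpos
  obtain ⟨x, hx, hfx⟩ := hpos
  obtain ⟨z, hz, hfz⟩ := hs.intermediate_value hy hx hf ⟨hneg.le, hfx⟩
  exact hne z hz hfz

theorem isPreconnected_slab {ι : Type*} [Finite ι] (i : ι) (a b : ℝ) :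
    IsPreconnected {x : EuclideanSpace ℝ ι | x i ∈ Icc a b} := by
  have := Fintype.ofFinite ι
  exact ((convex_Icc a b).is_linear_preimage (f := fun x : EuclideanSpace ℝ ι => x i)
    ⟨fun _ _ => rfl, fun _ _ => rfl⟩).isPreconnected

theorem IsDoubleWell.eventually_ne_zero_near_of_mul_pos (hW : IsDoubleWell W) {a₀ a b c : ℝ}
    (ha₀ : a₀ < a) (hab : a ≤ b) (hgap : b - a < c - b) :
    ∀ᶠ δ in 𝓝[>] (0 : ℝ), ∀ᶠ ε in 𝓝[>] (0 : ℝ), ∀ u : EuclideanSpace ℝ (Fin (n + 1)) → ℝ,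
      IsPhaseTransitionTorus W ε u → (∀ x, x 0 ∈ Icc (a₀ + δ) (a - δ) → u x ≠ 0) →
      (∀ x, x 0 ∈ Icc (b + δ) (c - δ) → u x ≠ 0) → ∀ y z, y 0 ∈ Icc (a₀ + δ) (a - δ) →
      z 0 ∈ Icc (b + δ) (c - δ) → 0 < u y * u z → ∀ x, |x 0 - b| ≤ δ → u x ≠ 0 := by
  filter_upwards [hW.eventually_neg_near (n := n) ha₀ hab hgap] with δ hδ
  filter_upwards [hδ] with ε hε u hu hleft hright y z hy hz hyz x hx
  have hneg {v : EuclideanSpace ℝ (Fin (n + 1)) → ℝ} (hv : IsPhaseTransitionTorus W ε v)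
      (hvl : ∀ x, x 0 ∈ Icc (a₀ + δ) (a - δ) → v x ≠ 0)
      (hvr : ∀ x, x 0 ∈ Icc (b + δ) (c - δ) → v x ≠ 0) (hvy : v y < 0) (hvz : v z < 0) :
      v x < 0 :=
    hε v hv (neg_of_isPreconnected_of_ne_zero (isPreconnected_slab 0 _ _)
      hv.smooth.continuous.continuousOn hvl hy hvy) (neg_of_isPreconnected_of_ne_zero
      (isPreconnected_slab 0 _ _) hv.smooth.continuous.continuousOn hvr hz hvz) x hx
  rcases mul_pos_iff.1 hyz with ⟨hpy, hpz⟩ | ⟨hny, hnz⟩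
  · exact (neg_lt_zero.1 (hneg (hu.neg hW) (fun x hx => neg_ne_zero.2 (hleft x hx))
      (fun x hx => neg_ne_zero.2 (hright x hx)) (neg_lt_zero.2 hpy) (neg_lt_zero.2 hpz))).ne'
  · exact (hneg hu hleft hright hny hnz).ne

-- Two of the signs of `u` on the three slabs agree, and each of the three possible coincidences
-- rules out zeros near one of the two middle hyperplanes.
theorem IsDoubleWell.eventually_exists_zero_of_gap_lt (hW : IsDoubleWell W) {a₀ a b c : ℝ}
    (ha₀ : a₀ < a) (hab : a < b) (hgap : b - a < c - b) :
    ∀ᶠ δ in 𝓝[>] (0 : ℝ), ∀ᶠ ε in 𝓝[>] (0 : ℝ), ∀ u : EuclideanSpace ℝ (Fin (n + 1)) → ℝ,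
      IsPhaseTransitionTorus W ε u → (∃ x, |x 0 - a| ≤ δ ∧ u x = 0) →
      (∃ x, |x 0 - b| ≤ δ ∧ u x = 0) → ∃ x, u x = 0 ∧
        (x 0 ∈ Icc (a₀ + δ) (a - δ) ∨ x 0 ∈ Icc (a + δ) (b - δ) ∨ x 0 ∈ Icc (b + δ) (c - δ)) := by
  have hmin : 0 < min (a - a₀) (b - a) / 2 := half_pos (lt_min (sub_pos.2 ha₀) (sub_pos.2 hab))
  filter_upwards [hW.eventually_ne_zero_near_of_mul_pos (n := n) ha₀ hab.le hgap,
    hW.eventually_ne_zero_near_of_mul_pos (n := n) ha₀ le_rfl (by linarith : a - a < b - a),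
    hW.eventually_ne_zero_near_of_mul_pos (n := n) hab le_rfl (by linarith : b - b < c - b),
    Ioo_mem_nhdsGT hmin] with δ hδ₁₃ hδ₁₂ hδ₂₃ hδ
  filter_upwards [hδ₁₃, hδ₁₂, hδ₂₃] with ε hε₁₃ hε₁₂ hε₂₃ u hu ⟨x, hx, hux⟩ ⟨y, hy, huy⟩
  have hδa : 2 * δ < a - a₀ := by linarith [min_le_left (a - a₀) (b - a), hδ.2]
  have hδb : 2 * δ < b - a := by linarith [min_le_right (a - a₀) (b - a), hδ.2]
  by_contra! hne
  have h₁ : ∀ z, z 0 ∈ Icc (a₀ + δ) (a - δ) → u z ≠ 0 := fun z hz huz => (hne z huz).1 hz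
  have h₂ : ∀ z, z 0 ∈ Icc (a + δ) (b - δ) → u z ≠ 0 := fun z hz huz => (hne z huz).2.1 hz
  have h₃ : ∀ z, z 0 ∈ Icc (b + δ) (c - δ) → u z ≠ 0 := fun z hz huz => (hne z huz).2.2 hz
  have hslab {r s : ℝ} (h : r ≤ s) : ∃ z : EuclideanSpace ℝ (Fin (n + 1)), z 0 ∈ Icc r s :=
    ⟨single 0 r, by simpa using h⟩
  obtain ⟨z₁, hz₁⟩ := hslab (show a₀ + δ ≤ a - δ by linarith)
  obtain ⟨z₂, hz₂⟩ := hslab (show a + δ ≤ b - δ by linarith)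
  obtain ⟨z₃, hz₃⟩ := hslab (show b + δ ≤ c - δ by linarith)
  have hopp₁₃ : u z₁ * u z₃ ≤ 0 := not_lt.1 fun h => hε₁₃ u hu h₁ h₃ z₁ z₃ hz₁ hz₃ h y hy huy
  have hopp₁₂ : u z₁ * u z₂ ≤ 0 := not_lt.1 fun h => hε₁₂ u hu h₁ h₂ z₁ z₂ hz₁ hz₂ h x hx hux
  have hopp₂₃ : u z₂ * u z₃ ≤ 0 := not_lt.1 fun h => hε₂₃ u hu h₂ h₃ z₂ z₃ hz₂ hz₃ h y hy huy
  have hpos : 0 < (u z₁ * u z₂ * u z₃) ^ 2 :=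
    sq_pos_of_ne_zero (mul_ne_zero (mul_ne_zero (h₁ z₁ hz₁) (h₂ z₂ hz₂)) (h₃ z₃ hz₃))
  have hnonpos : u z₁ * u z₂ * (u z₂ * u z₃) * (u z₁ * u z₃) ≤ 0 :=
    mul_nonpos_of_nonneg_of_nonpos (mul_nonneg_of_nonpos_of_nonpos hopp₁₂ hopp₂₃) hopp₁₃
  linarith

end PhaseTransition

theorem IsDoubleWell.antitone_gap {n : ℕ} {W : ℝ → ℝ} (hW : IsDoubleWell W) {Θ : ℤ → ℝ}
    (hΘ : StrictMono Θ)
    (hnear : ∀ δ > 0, ∃ᶠ ε in 𝓝[>] (0 : ℝ), ∃ u : EuclideanSpace ℝ (Fin (n + 1)) → ℝ,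
      IsPhaseTransitionTorus W ε u ∧ (∀ x, u x = 0 → ∃ N, |x 0 - Θ N| < δ) ∧
      ∀ N, ∃ x, |x 0 - Θ N| < δ ∧ u x = 0) :
    Antitone fun N => Θ (N + 1) - Θ N := by
  refine antitone_int_of_succ_le fun N => ?_
  by_contra! hgap
  have hpred : Θ (N - 1) < Θ N := hΘ (sub_one_lt N)
  obtain ⟨δ, hδε, hδ⟩ := ((hW.eventually_exists_zero_of_gap_lt (n := n) hpred (hΘ (lt_add_one N))
    hgap).and self_mem_nhdsWithin).exists
  obtain ⟨ε, ⟨u, hu, hzero, hhyp⟩, hε⟩ := ((hnear δ hδ).and_eventually hδε).exists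
  obtain ⟨y, hy, huy⟩ := hhyp N
  obtain ⟨z, hz, huz⟩ := hhyp (N + 1)
  obtain ⟨x, hux, hx⟩ := hε u hu ⟨y, hy.le, huy⟩ ⟨z, hz.le, huz⟩
  have hslab {M : ℤ} : x 0 ∉ Icc (Θ (M - 1) + δ) (Θ M - δ) := fun hM => by
    obtain ⟨K, hK⟩ := hzero x hux
    obtain ⟨hK₁, hK₂⟩ := abs_lt.1 hK
    have hlow : M - 1 < K := hΘ.lt_iff_lt.1 (by linarith [hM.1])
    have hhigh : K < M := hΘ.lt_iff_lt.1 (by linarith [hM.2])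
    lia
  rcases hx with hx | hx | hx
  · exact hslab hx
  · exact hslab (M := N + 1) (by rwa [add_sub_cancel_right])
  · exact hslab (M := N + 1 + 1) (by rwa [add_sub_cancel_right])

theorem gap_eq_div_of_antitone {Θ : ℤ → ℝ} {m : ℕ} {T : ℝ} (hm : 0 < m)
    (hper : ∀ N, Θ (N + m) = Θ N + T) (hanti : Antitone fun N => Θ (N + 1) - Θ N) (N : ℤ) :
    Θ (N + 1) - Θ N = T / m := by
  have hgap : Periodic (fun N => Θ (N + 1) - Θ N) (m : ℤ) := fun M => by
    simp only [add_right_comm M (m : ℤ) 1, hper, add_sub_add_right_eq_sub]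
  have hconst := eq_of_antitone_of_periodic (Int.natCast_pos.2 hm) hanti hgap
  rw [eq_div_iff (Nat.cast_ne_zero.2 hm.ne'), mul_comm]
  calc m * (Θ (N + 1) - Θ N)
      = ∑ k ∈ Finset.range m, (Θ (N + k + 1) - Θ (N + k)) := by
        simp only [hconst (N + _) N, Finset.sum_const, Finset.card_range, nsmul_eq_mul]
    _ = ∑ k ∈ Finset.range m, (Θ (N + (k + 1 : ℕ)) - Θ (N + k)) := by
        simp only [Nat.cast_succ, add_assoc]
    _ = Θ (N + m) - Θ N := by rw [Finset.sum_range_sub fun k : ℕ => Θ (N + k)]; simp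
    _ = T := by rw [hper, add_sub_cancel_left]

section UnrolledAngle

variable {m : ℕ} [NeZero m] (θ : Fin m → ℝ)

/-- The bi-infinite sequence of angles obtained by repeating `θ` with period `2 * π`, so that
`unrolledAngle θ (q * m + k) = θ k + 2 * π * q`. -/
noncomputable def unrolledAngle (N : ℤ) : ℝ :=
  θ (Int.divModEquiv m N).2 + 2 * π * (Int.divModEquiv m N).1

theorem unrolledAngle_mul_add (q : ℤ) (k : Fin m) :
    unrolledAngle θ (q * m + (k : ℕ)) = θ k + 2 * π * q := by
  rw [← Int.divModEquiv_symm_apply m (q, k), unrolledAngle, Equiv.apply_symm_apply]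

theorem exists_eq_mul_add (N : ℤ) : ∃ (q : ℤ) (k : Fin m), N = q * m + (k : ℕ) :=
  ⟨_, _, ((Int.divModEquiv m).symm_apply_apply N).symm⟩

theorem exists_eq_unrolledAngle_iff {r : ℝ} :
    (∃ N, r = unrolledAngle θ N) ↔ ∃ k : Fin m, ∃ q : ℤ, r = θ k + 2 * π * q := by
  rw [(Int.divModEquiv m).exists_congr_left, Prod.exists, exists_comm]
  simp only [unrolledAngle, Equiv.apply_symm_apply]

theorem unrolledAngle_add_period (N : ℤ) :
    unrolledAngle θ (N + m) = unrolledAngle θ N + 2 * π := by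
  obtain ⟨q, k, rfl⟩ := exists_eq_mul_add (m := m) N
  rw [show q * m + (k : ℕ) + m = (q + 1) * m + ((k : ℕ) : ℤ) by ring, unrolledAngle_mul_add,
    unrolledAngle_mul_add]
  push_cast
  ring

theorem unrolledAngle_succ (hm : 0 < m) (q : ℤ) (k : Fin m) :
    unrolledAngle θ (q * m + (k : ℕ) + 1) =
      (if h : (k : ℕ) + 1 < m then θ ⟨(k : ℕ) + 1, h⟩ else θ ⟨0, hm⟩ + 2 * π) + 2 * π * q := by
  split_ifs with h
  · rw [← unrolledAngle_mul_add θ q ⟨k + 1, h⟩, Nat.cast_succ, add_assoc]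
  · have hk : ((k : ℕ) : ℤ) + 1 = m := by lia
    rw [add_assoc, hk, unrolledAngle_add_period, add_right_comm, ← unrolledAngle_mul_add]
    simp

theorem strictMono_unrolledAngle (hm : 0 < m) (hmono : StrictMono θ) (hlb : 0 ≤ θ ⟨0, hm⟩)
    (hub : ∀ k, θ k < 2 * π) : StrictMono (unrolledAngle θ) := by
  refine strictMono_int_of_lt_succ fun N => ?_
  obtain ⟨q, k, rfl⟩ := exists_eq_mul_add (m := m) N
  rw [unrolledAngle_succ θ hm, unrolledAngle_mul_add]
  refine add_lt_add_left ?_ _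
  split_ifs with h
  · exact hmono (Fin.lt_def.2 (Nat.lt_succ_self k))
  · linarith [hub k]

end UnrolledAngle

section Hausdorff

theorem exists_forall_exists_mem_dist_le {ι : Type*} [Fintype ι] [DecidableEq ι]
    {A : Set (EuclideanSpace ℝ ι)} {L : ι → ℝ} (hL : ∀ j, 0 < L j) (hne : A.Nonempty)
    (hA : ∀ j, Periodic (· ∈ A) (single j (L j))) : ∃ R, ∀ x, ∃ y ∈ A, dist x y ≤ R := by
  obtain ⟨a, ha⟩ := hne
  obtain ⟨R, hR⟩ := (isCompact_setOf_forall_mem_Icc (fun _ => 0) L).isBounded.subset_closedBall a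
  refine ⟨R, fun x => ?_⟩
  obtain ⟨v, hv, hmem, -⟩ := exists_periodic_add_mem_Icc (s := Finset.univ) (fun j _ => hL j)
    (fun j _ => hA j) x
  refine ⟨a - v, (hv.sub_eq a).mpr ha, ?_⟩
  simpa [dist_eq_norm, sub_sub_eq_add_sub] using hR fun j => hmem j (Finset.mem_univ j)

theorem hausdorffEDist_ne_top_of_periodic {ι : Type*} [Fintype ι] [DecidableEq ι]
    {A B : Set (EuclideanSpace ℝ ι)} {L : ι → ℝ} (hL : ∀ j, 0 < L j) (hneA : A.Nonempty)
    (hneB : B.Nonempty) (hA : ∀ j, Periodic (· ∈ A) (single j (L j)))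
    (hB : ∀ j, Periodic (· ∈ B) (single j (L j))) : hausdorffEDist A B ≠ ⊤ := by
  obtain ⟨R, hR⟩ := exists_forall_exists_mem_dist_le hL hneA hA
  obtain ⟨S, hS⟩ := exists_forall_exists_mem_dist_le hL hneB hB
  refine ne_top_of_le_ne_top (ENNReal.ofReal_ne_top (r := max R S))
    (hausdorffEDist_le_of_mem_edist (fun x _ => ?_) fun y _ => ?_)
  · obtain ⟨y, hy, hxy⟩ := hS x
    exact ⟨y, hy, by rw [edist_dist]; exact ENNReal.ofReal_le_ofReal (hxy.trans (le_max_right _ _))⟩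
  · obtain ⟨x, hx, hyx⟩ := hR y
    exact ⟨x, hx, by rw [edist_dist]; exact ENNReal.ofReal_le_ofReal (hyx.trans (le_max_left _ _))⟩

variable {n : ℕ}

theorem IsPhaseTransitionTorus.hausdorffEDist_ne_top {W : ℝ → ℝ} {ε : ℝ}
    {u : EuclideanSpace ℝ (Fin (n + 1)) → ℝ} (hu : IsPhaseTransitionTorus W ε u)
    (hne : {x | u x = 0}.Nonempty) {Θ : ℤ → ℝ} {m : ℕ} (hΘ : ∀ N, Θ (N + m) = Θ N + 2 * π) :
    hausdorffEDist {x | u x = 0} {x | ∃ N, x 0 = Θ N} ≠ ⊤ := by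
  refine hausdorffEDist_ne_top_of_periodic (L := Fin.cons (2 * π) fun _ => 1)
    (Fin.cases two_pi_pos fun _ => one_pos) hne ⟨single 0 (Θ 0), 0, by simp⟩
    (Fin.cases (fun x => ?_) fun j x => ?_) (Fin.cases (fun x => ?_) fun j x => ?_)
  · have hsingle : single 0 (2 * π) = (2 * π) • single (0 : Fin (n + 1)) (1 : ℝ) := by
      ext j
      simp
    rw [Fin.cons_zero, hsingle]
    exact congrArg (· = 0) (hu.periodic_first x)
  · exact congrArg (· = 0) (hu.periodic_rest j.succ j.succ_ne_zero x)
  · have hshift : (∃ N, x 0 + 2 * π = Θ N) ↔ ∃ N, x 0 = Θ N := by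
      rw [(Equiv.addRight (m : ℤ)).symm.exists_congr_left]
      simp [hΘ]
    simpa using hshift
  · simp

theorem abs_apply_sub_apply_le_dist {ι : Type*} [Fintype ι] (x y : EuclideanSpace ℝ ι) (i : ι) :
    |x i - y i| ≤ dist x y := by
  simpa [dist_eq_norm] using PiLp.norm_apply_le (x - y) i

theorem forall_exists_abs_sub_lt_of_hausdorffDist_lt {Z : Set (EuclideanSpace ℝ (Fin (n + 1)))}
    {Θ : ℤ → ℝ} {δ : ℝ} (hfin : hausdorffEDist Z {x | ∃ N, x 0 = Θ N} ≠ ⊤)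
    (hδ : hausdorffDist Z {x | ∃ N, x 0 = Θ N} < δ) :
    (∀ x ∈ Z, ∃ N, |x 0 - Θ N| < δ) ∧ ∀ N, ∃ x, |x 0 - Θ N| < δ ∧ x ∈ Z := by
  refine ⟨fun x hx => ?_, fun N => ?_⟩
  · obtain ⟨y, ⟨N, hN⟩, hxy⟩ := exists_dist_lt_of_hausdorffDist_lt hx hδ hfin
    exact ⟨N, hN ▸ (abs_apply_sub_apply_le_dist x y 0).trans_lt hxy⟩
  · have hN : single 0 (Θ N) ∈ {x : EuclideanSpace ℝ (Fin (n + 1)) | ∃ N, x 0 = Θ N} :=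
      ⟨N, by simp⟩
    obtain ⟨x, hx, hxy⟩ := exists_dist_lt_of_hausdorffDist_lt' hN hδ hfin
    exact ⟨x, by simpa using (abs_apply_sub_apply_le_dist x _ 0).trans_lt hxy, hx⟩

end Hausdorff

/-- If the nodal sets of double-well phase transitions `u i` on the flat
torus `T^{1+n}` converge in the Hausdorff sense to
`Σ = ⋃_{k=1}^m ({θ_k} + 2πℤ) × ℝⁿ`, then the consecutive gaps between the angles
`θ_1 < ⋯ < θ_m` (with `θ_{m+1} := θ_1 + 2π`) are all equal to `2π/m`; i.e. `Σ` is
invariant under rotation of the circle factor by `2π/m`. -/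
theorem phase_transition_limit_equally_spaced
    {W : ℝ → ℝ} (hW : IsDoubleWell W) {n : ℕ} (hn : 1 ≤ n)
    (ε : ℕ → ℝ) (hε_pos : ∀ i, 0 < ε i) (hε_lim : Tendsto ε atTop (nhds 0))
    (u : ℕ → EuclideanSpace ℝ (Fin (n + 1)) → ℝ)
    (hu : ∀ i, IsPhaseTransitionTorus W (ε i) (u i))
    {m : ℕ} (hm : 0 < m) (θ : Fin m → ℝ)
    (hθ_mono : StrictMono θ) (hθ_lb : 0 ≤ θ ⟨0, hm⟩) (hθ_ub : ∀ k, θ k < 2 * π)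
    (Z : ℕ → Set (EuclideanSpace ℝ (Fin (n + 1))))
    (hZ : ∀ i, Z i = {x | u i x = 0}) (hZ_ne : ∀ i, (Z i).Nonempty)
    (Sig : Set (EuclideanSpace ℝ (Fin (n + 1))))
    (hSig : Sig = {x | ∃ k : Fin m, ∃ j : ℤ, x 0 = θ k + 2 * π * j})
    (hHaus : Tendsto (fun i => Metric.hausdorffDist (Z i) Sig) atTop (nhds 0)) :
    ∀ k : Fin m,
      (if h : (k : ℕ) + 1 < m then θ ⟨(k : ℕ) + 1, h⟩ else θ ⟨0, hm⟩ + 2 * π) - θ k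
        = 2 * π / m := by
  have : NeZero m := ⟨hm.ne'⟩
  obtain rfl : Z = fun i => {x | u i x = 0} := funext hZ
  have hε : Tendsto ε atTop (𝓝[>] 0) :=
    tendsto_nhdsWithin_iff.2 ⟨hε_lim, Eventually.of_forall hε_pos⟩
  simp only [hSig, ← exists_eq_unrolledAngle_iff θ] at hHaus
  have hanti : Antitone fun N => unrolledAngle θ (N + 1) - unrolledAngle θ N := by
    refine hW.antitone_gap (n := n) (strictMono_unrolledAngle θ hm hθ_mono hθ_lb hθ_ub)
      fun δ hδ => hε.frequently (Eventually.frequently ?_)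
    filter_upwards [hHaus.eventually_lt_const hδ] with i hi
    exact ⟨u i, hu i, forall_exists_abs_sub_lt_of_hausdorffDist_lt
      ((hu i).hausdorffEDist_ne_top (hZ_ne i) (unrolledAngle_add_period θ)) hi⟩
  intro k
  have hgap := gap_eq_div_of_antitone hm (unrolledAngle_add_period θ) hanti (0 * m + (k : ℕ))
  rw [unrolledAngle_succ θ hm, unrolledAngle_mul_add, add_sub_add_right_eq_sub] at hgap
  exact hgap
end

section
/- Fix ε > 0 and a double-well potential W. Let u : ℝ → [−1,1] be a smooth 2π-periodic function satisfying ε² u'' = W'(u) on ℝ, and suppose the zero set of u in [0, 2π) consists of exactly m points z_1 < z_2 < ⋯ < z_m, with m ≥ 1. Then all nodal intervals of u are congruent: setting z_{m+1} := z_1 + 2π, one has z_{k+1} − z_k = 2π/m for every k ∈ {1, …, m}. -/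
open Real Filter Set

/-!
An autonomous equation `u'' = f(u)` with `f` odd is preserved by `u ↦ -u(-·)`, so by uniqueness for
the initial value problem a solution is odd about each of its zeros. Its zero set is therefore
mapped into itself by the point reflection about any of its points, which exchanges the two nodal
intervals meeting there, so adjacent nodal intervals have equal length. The lengths of the `m`
nodal intervals in one period add up to the period.
-/

section ODE

variable {E : Type*} [NormedAddCommGroup E] [NormedSpace ℝ E]

theorem eq_of_isIntegralCurve_of_locallyLipschitz {V : E → E} (hV : LocallyLipschitz V)
    {x y : ℝ → E} (hx : IsIntegralCurve x fun _ => V) (hy : IsIntegralCurve y fun _ => V)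
    {t₀ : ℝ} (h₀ : x t₀ = y t₀) : x = y := by
  have agree_isClosed : IsClosed {t | x t = y t} := isClosed_eq hx.continuous hy.continuous
  have agree_isOpen : IsOpen {t | x t = y t} := by
    refine isOpen_iff_eventually.mpr fun t (ht : x t = y t) => ?_
    obtain ⟨K, s, hs, hK⟩ := hV (x t)
    exact ODE_solution_unique_of_eventually (v := fun _ => V) (s := fun _ => s)
      (.of_forall fun _ => hK)
      ((Eventually.of_forall hx).and (hx.continuous.continuousAt.eventually_mem hs))
      ((Eventually.of_forall hy).and (hy.continuous.continuousAt.eventually_mem (ht ▸ hs))) ht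
  have agree_univ := IsClopen.eq_univ ⟨agree_isClosed, agree_isOpen⟩ ⟨t₀, h₀⟩
  exact funext (eq_univ_iff_forall.mp agree_univ)

theorem eq_of_hasDerivAt_hasDerivAt_of_locallyLipschitz {f : E → E} (hf : LocallyLipschitz f)
    {u u' w w' : ℝ → E} (hu : ∀ t, HasDerivAt u (u' t) t) (hu' : ∀ t, HasDerivAt u' (f (u t)) t)
    (hw : ∀ t, HasDerivAt w (w' t) t) (hw' : ∀ t, HasDerivAt w' (f (w t)) t)
    {t₀ : ℝ} (h₀ : u t₀ = w t₀) (h₀' : u' t₀ = w' t₀) : u = w := by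
  have field_lipschitz : LocallyLipschitz fun p : E × E => (p.2, f p.1) :=
    LipschitzWith.prod_snd.locallyLipschitz.prodMk
      (hf.comp LipschitzWith.prod_fst.locallyLipschitz)
  have phase_eq : (fun t => (u t, u' t)) = fun t => (w t, w' t) :=
    eq_of_isIntegralCurve_of_locallyLipschitz field_lipschitz
      (fun t => (hu t).prodMk (hu' t)) (fun t => (hw t).prodMk (hw' t)) (Prod.ext h₀ h₀')
  exact congrArg (fun γ t => (γ t).1) phase_eq

variable {f : E → E} {u u' : ℝ → E}

theorem odd_of_hasDerivAt_hasDerivAt (hf : LocallyLipschitz f) (hodd : f.Odd)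
    (hu : ∀ t, HasDerivAt u (u' t) t) (hu' : ∀ t, HasDerivAt u' (f (u t)) t)
    (h₀ : u 0 = 0) : u.Odd := by
  have reflected_hasDerivAt (t : ℝ) : HasDerivAt (fun s => -u (-s)) (u' (-t)) t := by
    simpa only [neg_smul, one_smul, neg_neg, Function.comp_apply] using
      ((hu (-t)).scomp t (hasDerivAt_neg t)).fun_neg
  have reflected_hasDerivAt' (t : ℝ) : HasDerivAt (fun s => u' (-s)) (f (-u (-t))) t := by
    rw [hodd.eq, ← neg_one_smul ℝ]
    exact (hu' (-t)).scomp t (hasDerivAt_neg t)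
  have reflected_eq : (fun s => -u (-s)) = u :=
    eq_of_hasDerivAt_hasDerivAt_of_locallyLipschitz hf reflected_hasDerivAt reflected_hasDerivAt'
      hu hu' (t₀ := 0) (by simp [h₀]) (by simp)
  exact fun t => neg_eq_iff_eq_neg.mp (congrFun reflected_eq t)

theorem odd_comp_const_add_of_hasDerivAt_hasDerivAt (hf : LocallyLipschitz f) (hodd : f.Odd)
    (hu : ∀ t, HasDerivAt u (u' t) t) (hu' : ∀ t, HasDerivAt u' (f (u t)) t)
    {b : ℝ} (hb : u b = 0) : Function.Odd fun s => u (b + s) :=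
  odd_of_hasDerivAt_hasDerivAt hf hodd (fun t => (hu (b + t)).comp_const_add b t)
    (fun t => (hu' (b + t)).comp_const_add b t) (by rwa [add_zero])

end ODE

section NodalIntervals

/-- `(a, b)` is a nodal interval of a function with zero set `Z`: a bounded connected component of
the complement of `Z`, encoded by its two endpoints. -/
structure IsNodalInterval {G : Type*} [LT G] (Z : Set G) (a b : G) : Prop where
  left_mem : a ∈ Z
  right_mem : b ∈ Z
  lt : a < b
  notMem : ∀ t, a < t → t < b → t ∉ Z

/-- `Z` is mapped into itself by the point reflection `t ↦ 2b - t` about each `b ∈ Z`. -/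
def IsReflectionClosed {G : Type*} [Add G] [Sub G] (Z : Set G) : Prop :=
  ∀ b ∈ Z, ∀ t ∈ Z, b + (b - t) ∈ Z

/-- The sequence `z₁, …, z_m, z₁ + T` of the zeros in one period followed by the first zero of the
next period. Indices start at `0`, and the value is `z₁ + T` at every index `≥ m`. -/
def wrapAround {G : Type*} [Add G] {m : ℕ} (hm : 0 < m) (T : G) (z : Fin m → G) (k : ℕ) : G :=
  if h : k < m then z ⟨k, h⟩ else z ⟨0, hm⟩ + T

theorem wrapAround_of_lt {G : Type*} [Add G] {m : ℕ} {hm : 0 < m} {T : G} {z : Fin m → G} {k : ℕ}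
    (hk : k < m) : wrapAround hm T z k = z ⟨k, hk⟩ :=
  dif_pos hk

theorem wrapAround_self {G : Type*} [Add G] {m : ℕ} {hm : 0 < m} {T : G} {z : Fin m → G} :
    wrapAround hm T z m = z ⟨0, hm⟩ + T :=
  dif_neg (lt_irrefl m)

theorem isNodalInterval_of_ordConnected {G : Type*} [Preorder G] {Z I : Set G}
    (hI : I.OrdConnected) {m : ℕ} {z : Fin m → G} (hz_mono : StrictMono z) (hz : I ∩ Z = range z)
    {k : ℕ} (hk : k + 1 < m) : IsNodalInterval Z (z ⟨k, by lia⟩) (z ⟨k + 1, hk⟩) := by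
  have z_mem (j : Fin m) : z j ∈ I ∩ Z := hz.ge (mem_range_self j)
  refine ⟨(z_mem _).2, (z_mem _).2, hz_mono (Nat.lt_succ_self k), fun t hkt htk ht => ?_⟩
  obtain ⟨j, rfl⟩ : t ∈ range z :=
    hz.le ⟨hI.out (z_mem _).1 (z_mem _).1 ⟨hkt.le, htk.le⟩, ht⟩
  have hkj : k < j := hz_mono.lt_iff_lt.mp hkt
  have hjk : (j : ℕ) < k + 1 := hz_mono.lt_iff_lt.mp htk
  lia

variable {G : Type*} [AddCommGroup G] [LinearOrder G] [IsOrderedAddMonoid G] {Z : Set G}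

theorem IsNodalInterval.sub_eq_sub {a b c : G} (hab : IsNodalInterval Z a b)
    (hbc : IsNodalInterval Z b c) (hZ : IsReflectionClosed Z) : c - b = b - a := by
  have a_lt_b := hab.lt
  have b_lt_c := hbc.lt
  apply le_antisymm
  · by_contra! shorter
    exact hbc.notMem (b + (b - a)) (by grind) (by grind) (hZ b hab.right_mem a hab.left_mem)
  · by_contra! shorter
    exact hab.notMem (b + (b - c)) (by grind) (by grind) (hZ b hbc.left_mem c hbc.right_mem)

theorem nsmul_sub_eq_of_isNodalInterval (hZ : IsReflectionClosed Z) {m : ℕ} {y : ℕ → G}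
    (hy : ∀ k < m, IsNodalInterval Z (y k) (y (k + 1))) {k : ℕ} (hk : k < m) :
    m • (y (k + 1) - y k) = y m - y 0 := by
  have gap_eq (j : ℕ) (hj : j < m) : y (j + 1) - y j = y 1 - y 0 := by
    induction j with
    | zero => rfl
    | succ j ih => rw [(hy j (by lia)).sub_eq_sub (hy (j + 1) hj) hZ, ih (by lia)]
  calc m • (y (k + 1) - y k) = ∑ _j ∈ Finset.range m, (y (k + 1) - y k) := by
        rw [Finset.sum_const, Finset.card_range]
    _ = ∑ j ∈ Finset.range m, (y (j + 1) - y j) :=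
        Finset.sum_congr rfl fun j hj => by rw [gap_eq k hk, gap_eq j (Finset.mem_range.mp hj)]
    _ = y m - y 0 := Finset.sum_range_sub y m

variable {m : ℕ} {hm : 0 < m} {a T : G} {z : Fin m → G}

theorem isNodalInterval_last_first_add_period (hZT : Function.Periodic (· ∈ Z) T)
    (hz_mono : StrictMono z) (hz : Ico a (a + T) ∩ Z = range z) :
    IsNodalInterval Z (z ⟨m - 1, by lia⟩) (z ⟨0, hm⟩ + T) := by
  have z_mem (j : Fin m) : z j ∈ Ico a (a + T) ∩ Z := hz.ge (mem_range_self j)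
  have first_ge : a ≤ z ⟨0, hm⟩ := (z_mem _).1.1
  have last_lt : z ⟨m - 1, by lia⟩ < a + T := (z_mem _).1.2
  refine ⟨(z_mem _).2, (hZT _).mpr (z_mem _).2, by grind, fun t hlt htf ht => ?_⟩
  rcases lt_or_ge t (a + T) with same_period | next_period
  · obtain ⟨j, rfl⟩ : t ∈ range z := hz.le ⟨⟨(z_mem _).1.1.trans hlt.le, same_period⟩, ht⟩
    have hj : m - 1 < j := hz_mono.lt_iff_lt.mp hlt
    lia
  · have shifted_lt : t - T < z ⟨0, hm⟩ := sub_lt_iff_lt_add.mpr htf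
    obtain ⟨j, hj⟩ : t - T ∈ range z :=
      hz.le ⟨⟨le_sub_iff_add_le.mpr next_period, shifted_lt.trans (z_mem _).1.2⟩,
        (hZT.sub_eq t).mpr ht⟩
    exact Nat.not_lt_zero j (hz_mono.lt_iff_lt.mp (hj ▸ shifted_lt))

theorem isNodalInterval_wrapAround (hZT : Function.Periodic (· ∈ Z) T) (hz_mono : StrictMono z)
    (hz : Ico a (a + T) ∩ Z = range z) {k : ℕ} (hk : k < m) :
    IsNodalInterval Z (wrapAround hm T z k) (wrapAround hm T z (k + 1)) := by
  rw [wrapAround_of_lt hk]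
  rcases Nat.lt_or_ge (k + 1) m with hk' | hk'
  · rw [wrapAround_of_lt hk']
    exact isNodalInterval_of_ordConnected ordConnected_Ico hz_mono hz hk'
  · obtain rfl : m = k + 1 := by lia
    rw [wrapAround_self]
    exact isNodalInterval_last_first_add_period hZT hz_mono hz

theorem nsmul_wrapAround_sub (hZ : IsReflectionClosed Z) (hZT : Function.Periodic (· ∈ Z) T)
    (hz_mono : StrictMono z) (hz : Ico a (a + T) ∩ Z = range z) (k : Fin m) :
    m • (wrapAround k.pos T z (k + 1) - z k) = T := by
  have telescope := nsmul_sub_eq_of_isNodalInterval (y := wrapAround k.pos T z) hZ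
    (fun _ hj => isNodalInterval_wrapAround hZT hz_mono hz hj) k.isLt
  rwa [wrapAround_of_lt k.isLt, wrapAround_self, wrapAround_of_lt k.pos, add_sub_cancel_left]
    at telescope

end NodalIntervals

section PhaseTransition

theorem odd_deriv_of_even {𝕜 F : Type*} [NontriviallyNormedField 𝕜] [NormedAddCommGroup F]
    [NormedSpace 𝕜 F] {g : 𝕜 → F} (hg : g.Even) : (deriv g).Odd := fun x => by
  rw [← neg_eq_iff_eq_neg, ← deriv_comp_neg, funext hg]

variable {E : Type*} [NormedAddCommGroup E] [NormedSpace ℝ E] {f : E → E} {u u' : ℝ → E}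

theorem isReflectionClosed_zeros_of_hasDerivAt_hasDerivAt (hf : LocallyLipschitz f) (hodd : f.Odd)
    (hu : ∀ t, HasDerivAt u (u' t) t) (hu' : ∀ t, HasDerivAt u' (f (u t)) t) :
    IsReflectionClosed {t | u t = 0} := by
  intro b (hb : u b = 0) t (ht : u t = 0)
  have reflect := (odd_comp_const_add_of_hasDerivAt_hasDerivAt hf hodd hu hu' hb).eq (t - b)
  rwa [neg_sub, add_sub_cancel, ht, neg_zero] at reflect

theorem phase_transition_circle_nodal_intervals_congruent_general
    (hf : LocallyLipschitz f) (hodd : f.Odd)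
    (hu : ContDiff ℝ 2 u) (hODE : ∀ t, iteratedDeriv 2 u t = f (u t))
    {a T : ℝ} (hu_per : Function.Periodic u T)
    {m : ℕ} (hm : 0 < m) {z : Fin m → ℝ} (hz_mono : StrictMono z)
    (hz : {t ∈ Ico a (a + T) | u t = 0} = range z) (k : Fin m) :
    (if h : (k : ℕ) + 1 < m then z ⟨(k : ℕ) + 1, h⟩ else z ⟨0, hm⟩ + T) - z k = T / m := by
  have velocity (t : ℝ) : HasDerivAt u (deriv u t) t :=
    (hu.differentiable two_ne_zero t).hasDerivAt
  have acceleration (t : ℝ) : HasDerivAt (deriv u) (f (u t)) t := by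
    rw [← hODE, iteratedDeriv_succ, iteratedDeriv_one]
    exact (hu.differentiable_deriv_two t).hasDerivAt
  rw [eq_div_iff (by positivity), mul_comm, ← nsmul_eq_mul]
  have reflection_closed :=
    isReflectionClosed_zeros_of_hasDerivAt_hasDerivAt hf hodd velocity acceleration
  exact nsmul_wrapAround_sub reflection_closed (hu_per.comp (· = 0)) hz_mono hz k

end PhaseTransition

/-- For a `2π`-periodic one-dimensional double-well phase transition
whose zero set in `[0, 2π)` consists of exactly `m` points `z_1 < ⋯ < z_m`, all nodal
intervals are congruent: with `z_{m+1} := z_1 + 2π`, one has `z_{k+1} - z_k = 2π/m`. -/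
theorem phase_transition_circle_nodal_intervals_congruent
    {ε : ℝ} (hε : 0 < ε) {W : ℝ → ℝ} (hW : IsDoubleWell W)
    (u : ℝ → ℝ) (hu_smooth : ContDiff ℝ (⊤ : ℕ∞) u)
    (hu_mem : ∀ t, u t ∈ Set.Icc (-1 : ℝ) 1)
    (hu_per : ∀ t, u (t + 2 * π) = u t)
    (hODE : ∀ t, ε ^ 2 * iteratedDeriv 2 u t = deriv W (u t))
    {m : ℕ} (hm : 0 < m) (z : Fin m → ℝ) (hz_mono : StrictMono z)
    (hz : {t ∈ Set.Ico (0 : ℝ) (2 * π) | u t = 0} = Set.range z) :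
    ∀ k : Fin m,
      (if h : (k : ℕ) + 1 < m then z ⟨(k : ℕ) + 1, h⟩ else z ⟨0, hm⟩ + 2 * π) - z k
        = 2 * π / m := by
  have hW2 : ContDiff ℝ 2 W := hW.smooth.of_le (by norm_cast)
  exact phase_transition_circle_nodal_intervals_congruent_general
    (f := fun x => (ε ^ 2)⁻¹ • deriv W x) (hW2.deriv'.const_smul _).locallyLipschitz
    ((odd_deriv_of_even hW.even).const_smul (ε ^ 2)⁻¹) (hu_smooth.of_le (by norm_cast))
    (fun t => by rw [← hODE, smul_eq_mul, inv_mul_cancel_left₀ (by positivity)])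
    hu_per hm hz_mono ((zero_add (2 * π)).symm ▸ hz)
end

section
/- Fix ε > 0 and a double-well potential W. Let u : ℝ → [−1,1] be a smooth 2π-periodic function satisfying ε² u'' = W'(u) on ℝ, and suppose the zero set of u in [0, 2π) consists of exactly m points z_1 < z_2 < ⋯ < z_m, with m ≥ 1. Then for every k ∈ {1, …, m} (setting z_{m+1} := z_1 + 2π) and every s ∈ ℝ, u(z_{k+1} + s) = −u(z_k + s). In particular, on each nodal interval u equals ±1 times one and the same positive profile vanishing at the endpoints, and the sign ± alternates across each zero of u. -/
open Real Filter Set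

/-!
A solution of `u'' = F u` is determined by its value and velocity at one time, so it is even about
each of its critical points and, when `F` is odd, odd about each of its zeros. By Rolle there is a
critical point between two consecutive zeros `a < b`; reflecting `a` or `b` about it yields another
zero, so it can only be the midpoint of `[a, b]`. Composing the odd reflection about `a` with the
even one about the midpoint gives the translation by `b - a` together with a change of sign.
-/

/-- A classical solution `u : ℝ → E`, defined for all times, of Newton's equation `u'' = F u` in a
force field `F`. Stating differentiability of `u` and `deriv u` through `HasDerivAt` rules out the
junk values of `deriv`. -/
structure IsNewtonSolution {E : Type*} [NormedAddCommGroup E] [NormedSpace ℝ E]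
    (F : E → E) (u : ℝ → E) : Prop where
  hasDerivAt (t : ℝ) : HasDerivAt u (deriv u t) t
  hasDerivAt_deriv (t : ℝ) : HasDerivAt (deriv u) (F (u t)) t

section NormedSpace

variable {E : Type*} [NormedAddCommGroup E] [NormedSpace ℝ E]

theorem isIntegralCurve_unique_of_locallyLipschitz {v : E → E} (hv : LocallyLipschitz v)
    {γ₁ γ₂ : ℝ → E} (h₁ : IsIntegralCurve γ₁ fun _ ↦ v) (h₂ : IsIntegralCurve γ₂ fun _ ↦ v)
    {t₀ : ℝ} (h : γ₁ t₀ = γ₂ t₀) : γ₁ = γ₂ := by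
  funext t
  obtain ⟨a, ha⟩ := exists_lt (min t₀ t)
  obtain ⟨b, hb⟩ := exists_gt (max t₀ t)
  rw [lt_min_iff] at ha
  rw [max_lt_iff] at hb
  have hc₁ : Continuous γ₁ := continuous_iff_continuousAt.2 fun s ↦ (h₁ s).continuousAt
  have hc₂ : Continuous γ₂ := continuous_iff_continuousAt.2 fun s ↦ (h₂ s).continuousAt
  have hK : IsCompact (γ₁ '' Icc a b ∪ γ₂ '' Icc a b) :=
    (isCompact_Icc.image hc₁).union (isCompact_Icc.image hc₂)
  obtain ⟨K, hLip⟩ := hv.locallyLipschitzOn.exists_lipschitzOnWith_of_compact hK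
  exact ODE_solution_unique_of_mem_Ioo (v := fun _ ↦ v) (fun _ _ ↦ hLip) ⟨ha.1, hb.1⟩
    (fun s hs ↦ ⟨h₁ s, .inl (mem_image_of_mem γ₁ (Ioo_subset_Icc_self hs))⟩)
    (fun s hs ↦ ⟨h₂ s, .inr (mem_image_of_mem γ₂ (Ioo_subset_Icc_self hs))⟩) h ⟨ha.2, hb.2⟩

theorem isNewtonSolution_of_smul_iteratedDeriv_two {c : ℝ} (hc : c ≠ 0) {G : E → E} {u : ℝ → E}
    (hu : ContDiff ℝ 2 u) (h : ∀ t, c • iteratedDeriv 2 u t = G (u t)) :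
    IsNewtonSolution (c⁻¹ • G) u where
  hasDerivAt t := (hu.differentiable two_ne_zero t).hasDerivAt
  hasDerivAt_deriv t := by
    have hderiv : deriv (deriv u) t = (c⁻¹ • G) (u t) := by
      rw [Pi.smul_apply, ← h, inv_smul_smul₀ hc, iteratedDeriv_succ, iteratedDeriv_one]
    exact hderiv ▸ (hu.differentiable_deriv_two t).hasDerivAt

namespace IsNewtonSolution

variable {F : E → E} {u v : ℝ → E}

theorem isIntegralCurve_phase (hu : IsNewtonSolution F u) :
    IsIntegralCurve (fun t ↦ (u t, deriv u t)) fun _ p ↦ (p.2, F p.1) :=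
  fun t ↦ (hu.hasDerivAt t).prodMk (hu.hasDerivAt_deriv t)

theorem eq_of_initial_eq (hF : LocallyLipschitz F) (hu : IsNewtonSolution F u)
    (hv : IsNewtonSolution F v) {t₀ : ℝ} (h : u t₀ = v t₀) (h' : deriv u t₀ = deriv v t₀) :
    u = v := by
  have hphase : LocallyLipschitz fun p : E × E ↦ (p.2, F p.1) :=
    LipschitzWith.prod_snd.locallyLipschitz.prodMk
      (hF.comp LipschitzWith.prod_fst.locallyLipschitz)
  have hcurves := isIntegralCurve_unique_of_locallyLipschitz hphase
    hu.isIntegralCurve_phase hv.isIntegralCurve_phase (Prod.ext h h')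
  exact funext fun t ↦ congrArg Prod.fst (congrFun hcurves t)

theorem neg (hu : IsNewtonSolution F u) (hF : F.Odd) : IsNewtonSolution F (-u) where
  hasDerivAt t := (hu.hasDerivAt t).differentiableAt.neg.hasDerivAt
  hasDerivAt_deriv t := by
    rw [deriv.neg', Pi.neg_apply, hF]
    exact (hu.hasDerivAt_deriv t).neg

theorem comp_const_sub (hu : IsNewtonSolution F u) (c : ℝ) :
    IsNewtonSolution F fun t ↦ u (c - t) where
  hasDerivAt t := ((hu.hasDerivAt (c - t)).comp_const_sub c t).differentiableAt.hasDerivAt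
  hasDerivAt_deriv t := by
    have hderiv : deriv (fun t ↦ u (c - t)) = fun t ↦ -deriv u (c - t) :=
      funext fun _ ↦ deriv_comp_const_sub ..
    rw [hderiv]
    simpa only [neg_neg] using! ((hu.hasDerivAt_deriv (c - t)).comp_const_sub c t).neg

theorem reflect_of_deriv_eq_zero (hF : LocallyLipschitz F) (hu : IsNewtonSolution F u) {c : ℝ}
    (hc : deriv u c = 0) (t : ℝ) : u (2 * c - t) = u t := by
  have hcc : 2 * c - c = c := by ring
  refine congrFun (eq_of_initial_eq hF (hu.comp_const_sub (2 * c)) hu (t₀ := c) ?_ ?_) t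
  · rw [hcc]
  · rw [deriv_comp_const_sub, hcc, hc, neg_zero]

theorem reflect_of_eq_zero (hF : LocallyLipschitz F) (hodd : F.Odd) (hu : IsNewtonSolution F u)
    {a : ℝ} (ha : u a = 0) (t : ℝ) : u (2 * a - t) = -u t := by
  have haa : 2 * a - a = a := by ring
  refine congrFun
    (eq_of_initial_eq hF (hu.comp_const_sub (2 * a)) (hu.neg hodd) (t₀ := a) ?_ ?_) t
  · rw [haa, Pi.neg_apply, ha, neg_zero]
  · rw [deriv_comp_const_sub, haa, deriv.neg]

theorem antiperiodic_of_zero_of_critical (hF : LocallyLipschitz F) (hodd : F.Odd)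
    (hu : IsNewtonSolution F u) {a c : ℝ} (ha : u a = 0) (hc : deriv u c = 0) :
    Function.Antiperiodic u (2 * c - 2 * a) := fun t ↦
  calc
    u (t + (2 * c - 2 * a)) = u (2 * c - (2 * a - t)) := by congr 1; ring
    _ = u (2 * a - t) := reflect_of_deriv_eq_zero hF hu hc _
    _ = -u t := reflect_of_eq_zero hF hodd hu ha t

end IsNewtonSolution

end NormedSpace

namespace IsNewtonSolution

variable {F u : ℝ → ℝ} {a b : ℝ}

theorem two_mul_critical_eq_add (hF : LocallyLipschitz F) (hu : IsNewtonSolution F u)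
    (ha : u a = 0) (hb : u b = 0) (hab : ∀ t ∈ Ioo a b, u t ≠ 0) {c : ℝ} (hc : c ∈ Ioo a b)
    (hc' : deriv u c = 0) : 2 * c = a + b := by
  have hreflect := reflect_of_deriv_eq_zero hF hu hc'
  obtain ⟨hac, hcb⟩ := hc
  rcases lt_trichotomy (2 * c) (a + b) with hlt | heq | hgt
  · exact absurd ((hreflect a).trans ha) (hab _ ⟨by linarith, by linarith⟩)
  · exact heq
  · exact absurd ((hreflect b).trans hb) (hab _ ⟨by linarith, by linarith⟩)

theorem antiperiodic_of_consecutive_zeros (hF : LocallyLipschitz F) (hodd : F.Odd)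
    (hu : IsNewtonSolution F u) (hlt : a < b) (ha : u a = 0) (hb : u b = 0)
    (hab : ∀ t ∈ Ioo a b, u t ≠ 0) : Function.Antiperiodic u (b - a) := by
  obtain ⟨c, hc, hc'⟩ := exists_hasDerivAt_eq_zero hlt
    (HasDerivAt.continuousOn fun t _ ↦ hu.hasDerivAt t) (ha.trans hb.symm)
    fun t _ ↦ hu.hasDerivAt t
  have hmid : 2 * c - 2 * a = b - a := by
    linarith [two_mul_critical_eq_add hF hu ha hb hab hc hc']
  exact hmid ▸ antiperiodic_of_zero_of_critical hF hodd hu ha hc'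

end IsNewtonSolution

/-- The successor of `z k` in the `T`-periodic extension of the list of points
`z 0 < ⋯ < z (m - 1)` of a fundamental domain of length `T`: after the last point comes
`z 0 + T`. -/
def periodicNext {α : Type*} [Add α] (T : α) {m : ℕ} (z : Fin m → α) (k : Fin m) : α :=
  if h : (k : ℕ) + 1 < m then z ⟨(k : ℕ) + 1, h⟩ else z ⟨0, k.pos⟩ + T

section PeriodicNext

variable {α : Type*} [AddCommGroup α] {T : α} {p : α → Prop} {m : ℕ} {z : Fin m → α}

theorem periodicNext_prop (hp : Function.Periodic p T) (hz : ∀ j, p (z j)) (k : Fin m) :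
    p (periodicNext T z k) := by
  unfold periodicNext
  split_ifs
  · exact hz _
  · rw [hp]
    exact hz _

variable [LinearOrder α] [IsOrderedAddMonoid α]

theorem lt_periodicNext (hz_mono : StrictMono z) (hz : ∀ j, z j ∈ Ico 0 T) (k : Fin m) :
    z k < periodicNext T z k := by
  unfold periodicNext
  split_ifs
  · exact hz_mono (Fin.lt_def.2 (Nat.lt_succ_self k))
  · exact (hz k).2.trans_le (le_add_of_nonneg_left (hz _).1)

theorem not_of_mem_Ioo_periodicNext (hp : Function.Periodic p T) (hz_mono : StrictMono z)
    (hz : {t ∈ Ico 0 T | p t} = range z) {k : Fin m} {t : α}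
    (ht : t ∈ Ioo (z k) (periodicNext T z k)) : ¬p t := by
  intro hpt
  have hmem (j : Fin m) : z j ∈ Ico 0 T := (hz.ge (mem_range_self j)).1
  have hnonneg : 0 ≤ t := (hmem k).1.trans ht.1.le
  unfold periodicNext at ht
  split_ifs at ht with hk
  · obtain ⟨j, rfl⟩ : t ∈ range z := hz.le ⟨⟨hnonneg, ht.2.trans (hmem _).2⟩, hpt⟩
    have hkj : (k : ℕ) < j := hz_mono.lt_iff_lt.1 ht.1
    have hjk : (j : ℕ) < k + 1 := hz_mono.lt_iff_lt.1 ht.2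
    omega
  · rcases lt_or_ge t T with htT | hTt
    · obtain ⟨j, rfl⟩ : t ∈ range z := hz.le ⟨⟨hnonneg, htT⟩, hpt⟩
      have hkj : (k : ℕ) < j := hz_mono.lt_iff_lt.1 ht.1
      omega
    · have hlt : t - T < z ⟨0, k.pos⟩ := sub_lt_iff_lt_add.2 ht.2
      obtain ⟨j, hj⟩ : t - T ∈ range z :=
        hz.le ⟨⟨sub_nonneg.2 hTt, hlt.trans (hmem _).2⟩, by rwa [hp.sub_eq]⟩
      exact Nat.not_lt_zero j (hz_mono.lt_iff_lt.1 (hj ▸ hlt))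

end PeriodicNext

section Deriv

variable {E : Type*} [NormedAddCommGroup E] [NormedSpace ℝ E] {f : ℝ → E}

theorem odd_deriv_of_even_s3 (hf : f.Even) : (deriv f).Odd := fun x ↦ by
  have h := deriv_comp_neg f x
  rw [funext hf] at h
  rw [h, neg_neg]

theorem locallyLipschitz_const_smul_deriv (hf : ContDiff ℝ 2 f) (c : ℝ) :
    LocallyLipschitz (c • deriv f) :=
  have hderiv : ContDiff ℝ 1 (deriv f) := hf.deriv'
  (hderiv.const_smul c).locallyLipschitz

end Deriv

theorem phase_transition_circle_alternating_profile_general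
    {F : ℝ → ℝ} (hF : LocallyLipschitz F) (hodd : F.Odd) {u : ℝ → ℝ} (hu : IsNewtonSolution F u)
    {T : ℝ} (hper : Function.Periodic u T) {m : ℕ} {z : Fin m → ℝ} (hz_mono : StrictMono z)
    (hz : {t ∈ Ico 0 T | u t = 0} = range z) (k : Fin m) (s : ℝ) :
    u (periodicNext T z k + s) = -u (z k + s) := by
  have hz_mem (j : Fin m) : z j ∈ Ico 0 T ∧ u (z j) = 0 := hz.ge (mem_range_self j)
  have hzero_per : Function.Periodic (fun t ↦ u t = 0) T := hper.comp (· = 0)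
  have hanti : Function.Antiperiodic u (periodicNext T z k - z k) :=
    hu.antiperiodic_of_consecutive_zeros hF hodd
      (lt_periodicNext hz_mono (fun j ↦ (hz_mem j).1) k) (hz_mem k).2
      (periodicNext_prop hzero_per (fun j ↦ (hz_mem j).2) k)
      fun _ ↦ not_of_mem_Ioo_periodicNext hzero_per hz_mono hz
  calc
    u (periodicNext T z k + s) = u (z k + s + (periodicNext T z k - z k)) := by congr 1; ring
    _ = -u (z k + s) := hanti _

/-- For a `2π`-periodic one-dimensional double-well phase transition
whose zero set in `[0, 2π)` consists of exactly `m` points `z_1 < ⋯ < z_m`, one has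
(with `z_{m+1} := z_1 + 2π`) `u (z_{k+1} + s) = -u (z_k + s)` for all `k` and all `s`:
on each nodal interval `u` is `±1` times one and the same positive profile, with the
sign alternating across each zero. -/
theorem phase_transition_circle_alternating_profile
    {ε : ℝ} (hε : 0 < ε) {W : ℝ → ℝ} (hW : IsDoubleWell W)
    (u : ℝ → ℝ) (hu_smooth : ContDiff ℝ (⊤ : ℕ∞) u)
    (hu_mem : ∀ t, u t ∈ Set.Icc (-1 : ℝ) 1)
    (hu_per : ∀ t, u (t + 2 * π) = u t)
    (hODE : ∀ t, ε ^ 2 * iteratedDeriv 2 u t = deriv W (u t))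
    {m : ℕ} (hm : 0 < m) (z : Fin m → ℝ) (hz_mono : StrictMono z)
    (hz : {t ∈ Set.Ico (0 : ℝ) (2 * π) | u t = 0} = Set.range z) :
    ∀ k : Fin m, ∀ s : ℝ,
      u ((if h : (k : ℕ) + 1 < m then z ⟨(k : ℕ) + 1, h⟩ else z ⟨0, hm⟩ + 2 * π) + s)
        = -u (z k + s) :=
  phase_transition_circle_alternating_profile_general
    (locallyLipschitz_const_smul_deriv (contDiff_infty.1 hW.smooth 2) _)
    ((odd_deriv_of_even_s3 hW.even).const_smul _)
    (isNewtonSolution_of_smul_iteratedDeriv_two (by positivity) (contDiff_infty.1 hu_smooth 2) hODE)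
    hu_per hz_mono hz
end
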